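/- arXiv:0804.2282 — 5 statements merged into one kernel-verified Lean document; each statement's English description precedes it below -/
import Mathlib

section
/- Let a : I → ℝ be twice continuously differentiable and set ψ(x) := ψ̃(x)(1 + ℏ a(x)) where ψ̃(x) := V₀(x;ℏ)^{-1/4} e^{S(x;ℏ)/ℏ}. Then ψ solves −ℏ² ψ'' + V ψ = 0 on I if and only if a satisfies the first-order-in-(a' ψ̃²) equation (a'(x) ψ̃(x)²)' = −V₂(x;ℏ) ψ̃(x)² (1/ℏ + a(x)) on I, where V₂(x;ℏ) := (1/4)⟨x⟩^{-2} − V₀''(x;ℏ)/(4 V₀(x;ℏ)) + 5 (V₀'(x;ℏ))²/(16 V₀(x;ℏ)²). -/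
/-- The modified potential `V₀(x;ℏ) = V(x) + (ℏ²/4)⟨x⟩⁻²` where `⟨x⟩ = √(1+x²)`. -/
noncomputable def V0 (V : ℝ → ℝ) (h x : ℝ) : ℝ := V x + h ^ 2 / 4 * (1 + x ^ 2)⁻¹

/-- The action `S(x;ℏ) = ∫_{x₀}^x √(V₀(t;ℏ)) dt`. -/
noncomputable def Sfun (V : ℝ → ℝ) (h x₀ x : ℝ) : ℝ := ∫ t in x₀..x, Real.sqrt (V0 V h t)

/-- `V₂(x;ℏ) = (1/4)⟨x⟩⁻² − V₀''/(4V₀) + 5(V₀')²/(16V₀²)`. -/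
noncomputable def V2 (V : ℝ → ℝ) (h x : ℝ) : ℝ :=
  1 / 4 * (1 + x ^ 2)⁻¹ - deriv (deriv (V0 V h)) x / (4 * V0 V h x)
    + 5 * (deriv (V0 V h) x) ^ 2 / (16 * (V0 V h x) ^ 2)

/-- The WKB ansatz `ψ̃(x) = V₀(x;ℏ)^{-1/4} e^{S(x;ℏ)/ℏ}`. -/
noncomputable def psiWKB (V : ℝ → ℝ) (h x₀ x : ℝ) : ℝ :=
  V0 V h x ^ (-(1 : ℝ) / 4) * Real.exp (Sfun V h x₀ x / h)

/-!
Put `g = √Q / h - Q' / (4 * Q)`, the logarithmic derivative of `p = Q ^ (-1/4) * exp (S / h)` when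
`S' = √Q`. In `p'' = (g' + g ^ 2) * p` the terms of order `h⁻¹` cancel, which leaves
`p'' = (Q / h ^ 2 - Q'' / (4 * Q) + 5 * Q' ^ 2 / (16 * Q ^ 2)) * p`. For `Q = V₀` this reads
`h ^ 2 * p'' = (V + h ^ 2 * V₂) * p`. Reduction of order,
`p * (p * u)'' = (u' * p ^ 2)' + p * p'' * u`, applied to `u = 1 + h * a`, then turns the
Schrödinger operator acting on `p * u`, up to the nonvanishing factor `-h ^ 3 / p`, into
`(a' * p ^ 2)' + V₂ * p ^ 2 * (1 / h + a)`.
-/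

open Filter Topology

theorem differentiableOn_deriv_of_contDiffOn_two {𝕜 F : Type*} [NontriviallyNormedField 𝕜]
    [NormedAddCommGroup F] [NormedSpace 𝕜 F] {f : 𝕜 → F} {s : Set 𝕜} (hs : IsOpen s)
    (hf : ContDiffOn 𝕜 2 f s) : DifferentiableOn 𝕜 (deriv f) s :=
  (hf.deriv_of_isOpen (m := 1) hs (by norm_num)).differentiableOn one_ne_zero

theorem contDiff_inv_one_add_sq {n : WithTop ℕ∞} : ContDiff ℝ n fun x : ℝ => (1 + x ^ 2)⁻¹ :=
  ContDiff.inv (by fun_prop) fun x => by positivity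

section ReductionOfOrder

variable {𝕜 : Type*} [NontriviallyNormedField 𝕜] {p u a : 𝕜 → 𝕜} {h v w x : 𝕜}

theorem mul_deriv_deriv_mul
    (hp : ∀ᶠ y in 𝓝 x, DifferentiableAt 𝕜 p y) (hp' : DifferentiableAt 𝕜 (deriv p) x)
    (hu : ∀ᶠ y in 𝓝 x, DifferentiableAt 𝕜 u y) (hu' : DifferentiableAt 𝕜 (deriv u) x) :
    p x * deriv (deriv fun y => p y * u y) x
      = deriv (fun y => deriv u y * p y ^ 2) x + p x * deriv (deriv p) x * u x := by
  have deriv_mul_eventuallyEq :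
      deriv (fun y => p y * u y) =ᶠ[𝓝 x] fun y => deriv p y * u y + p y * deriv u y := by
    filter_upwards [hp, hu] with y hpy huy using deriv_fun_mul hpy huy
  have hpx := hp.self_of_nhds
  have hux := hu.self_of_nhds
  rw [deriv_mul_eventuallyEq.deriv_eq, deriv_fun_add (hp'.fun_mul hux) (hpx.fun_mul hu'),
    deriv_fun_mul hp' hux, deriv_fun_mul hpx hu', deriv_fun_mul hu' (hpx.fun_pow 2),
    deriv_fun_pow hpx]
  ring

theorem schrodinger_mul_one_add_iff (hh : h ≠ 0) (hpx : p x ≠ 0)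
    (hp : ∀ᶠ y in 𝓝 x, DifferentiableAt 𝕜 p y) (hp' : DifferentiableAt 𝕜 (deriv p) x)
    (ha : ∀ᶠ y in 𝓝 x, DifferentiableAt 𝕜 a y) (ha' : DifferentiableAt 𝕜 (deriv a) x)
    (hode : deriv (deriv p) x = (v / h ^ 2 + w) * p x) :
    -h ^ 2 * deriv (deriv fun y => p y * (1 + h * a y)) x + v * (p x * (1 + h * a x)) = 0
      ↔ deriv (fun y => deriv a y * p y ^ 2) x = -w * p x ^ 2 * (1 / h + a x) := by
  have deriv_factor : deriv (fun y => 1 + h * a y) = fun y => h * deriv a y := by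
    rw [deriv_const_add', deriv_const_mul_field']
  have reduction := mul_deriv_deriv_mul hp hp'
    (ha.mono fun y hy => (hy.const_mul h).const_add 1)
    (by simpa only [deriv_factor] using ha'.const_mul h)
  simp only [deriv_factor, mul_assoc h, deriv_const_mul_field] at reduction
  set ψ'' := deriv (deriv fun y => p y * (1 + h * a y)) x
  set flux' := deriv (fun y => deriv a y * p y ^ 2) x
  have factorization : p x * (-h ^ 2 * ψ'' + v * (p x * (1 + h * a x)))
      = -h ^ 3 * (flux' - -w * p x ^ 2 * (1 / h + a x)) := by
    rw [hode] at reduction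
    calc p x * (-h ^ 2 * ψ'' + v * (p x * (1 + h * a x)))
        = -h ^ 2 * (p x * ψ'') + v * p x ^ 2 * (1 + h * a x) := by ring
      _ = -h ^ 3 * (flux' - -w * p x ^ 2 * (1 / h + a x)) := by
        rw [reduction]
        field_simp
        ring
  rw [← sub_eq_zero (a := flux'), ← mul_eq_zero_iff_left hpx, factorization,
    mul_eq_zero_iff_left (neg_ne_zero.2 (pow_ne_zero 3 hh))]

end ReductionOfOrder

section LiouvilleGreen

/-- The Liouville–Green (WKB) approximate solution `Q ^ (-1/4) * exp (S / h)` of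
`h ^ 2 * y'' = Q * y`. The phase `S` is a separate argument, so that any antiderivative of `√Q` can
be used; `psiWKB` is the case `Q = V₀`. -/
noncomputable def liouvilleGreen (Q S : ℝ → ℝ) (h x : ℝ) : ℝ :=
  Q x ^ (-(1 : ℝ) / 4) * Real.exp (S x / h)

/-- The logarithmic derivative of `liouvilleGreen Q S h` for a phase with `S' = √Q`; it does not
depend on the choice of `S`. -/
noncomputable def liouvilleGreenLogDeriv (Q : ℝ → ℝ) (h x : ℝ) : ℝ :=
  √(Q x) / h - deriv Q x / (4 * Q x)

variable {Q S : ℝ → ℝ} {h x : ℝ}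

theorem liouvilleGreen_pos (hpos : 0 < Q x) : 0 < liouvilleGreen Q S h x :=
  mul_pos (Real.rpow_pos_of_pos hpos _) (Real.exp_pos _)

theorem hasDerivAt_liouvilleGreen (hpos : 0 < Q x) (hQ : DifferentiableAt ℝ Q x)
    (hS : HasDerivAt S (√(Q x)) x) :
    HasDerivAt (liouvilleGreen Q S h)
      (liouvilleGreen Q S h x * liouvilleGreenLogDeriv Q h x) x := by
  refine ((hQ.hasDerivAt.rpow_const (Or.inl hpos.ne')).mul (hS.div_const h).exp).congr_deriv ?_
  simp only [liouvilleGreen, liouvilleGreenLogDeriv, Real.rpow_sub_one hpos.ne']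
  ring

theorem hasDerivAt_liouvilleGreenLogDeriv (hpos : 0 < Q x) (hQ : DifferentiableAt ℝ Q x)
    (hQ' : DifferentiableAt ℝ (deriv Q) x) :
    HasDerivAt (liouvilleGreenLogDeriv Q h)
      (Q x / h ^ 2 - deriv (deriv Q) x / (4 * Q x) + 5 * deriv Q x ^ 2 / (16 * Q x ^ 2)
        - liouvilleGreenLogDeriv Q h x ^ 2) x := by
  refine (((hQ.hasDerivAt.sqrt hpos.ne').div_const h).sub
    (hQ'.hasDerivAt.div (hQ.hasDerivAt.const_mul 4) (by positivity))).congr_deriv ?_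
  have hsqrt : √(Q x) ≠ 0 := (Real.sqrt_pos.2 hpos).ne'
  have hsq : Q x = √(Q x) ^ 2 := (Real.sq_sqrt hpos.le).symm
  simp only [liouvilleGreenLogDeriv]
  generalize √(Q x) = s at *
  rw [hsq]
  field_simp
  ring

theorem hasDerivAt_deriv_liouvilleGreen (hpos : 0 < Q x)
    (hQ : ∀ᶠ y in 𝓝 x, DifferentiableAt ℝ Q y) (hQ' : DifferentiableAt ℝ (deriv Q) x)
    (hS : ∀ᶠ y in 𝓝 x, HasDerivAt S (√(Q y)) y) :
    HasDerivAt (deriv (liouvilleGreen Q S h))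
      ((Q x / h ^ 2 - deriv (deriv Q) x / (4 * Q x) + 5 * deriv Q x ^ 2 / (16 * Q x ^ 2))
        * liouvilleGreen Q S h x) x := by
  have hQx := hQ.self_of_nhds
  have deriv_eventuallyEq : deriv (liouvilleGreen Q S h) =ᶠ[𝓝 x]
      fun y => liouvilleGreen Q S h y * liouvilleGreenLogDeriv Q h y := by
    filter_upwards [hQ, hS, hQx.continuousAt.eventually_const_lt hpos] with y hQy hSy hposy
      using (hasDerivAt_liouvilleGreen hposy hQy hSy).deriv
  refine (((hasDerivAt_liouvilleGreen hpos hQx hS.self_of_nhds).mul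
    (hasDerivAt_liouvilleGreenLogDeriv hpos hQx hQ')).congr_of_eventuallyEq
      deriv_eventuallyEq).congr_deriv ?_
  ring

end LiouvilleGreen

section WKB

variable {I : Set ℝ} {V a : ℝ → ℝ} {h x₀ x : ℝ}

theorem differentiableOn_V0 (hV : DifferentiableOn ℝ V I) (h : ℝ) :
    DifferentiableOn ℝ (V0 V h) I :=
  hV.add ((contDiff_inv_one_add_sq.differentiable one_ne_zero).const_mul _).differentiableOn

theorem differentiableOn_deriv_V0 (hI : IsOpen I) (hV : DifferentiableOn ℝ V I)
    (hV' : DifferentiableOn ℝ (deriv V) I) (h : ℝ) : DifferentiableOn ℝ (deriv (V0 V h)) I := by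
  have hsmooth : ContDiff ℝ 2 fun x : ℝ => h ^ 2 / 4 * (1 + x ^ 2)⁻¹ :=
    contDiff_const.mul contDiff_inv_one_add_sq
  refine (hV'.add hsmooth.differentiable_deriv_two.differentiableOn).congr fun y hy => ?_
  exact deriv_fun_add (hV.differentiableAt (hI.mem_nhds hy))
    (hsmooth.differentiable two_ne_zero).differentiableAt

theorem hasDerivAt_Sfun (hI : IsOpen I) (hconn : I.OrdConnected) (hV₀ : ContinuousOn (V0 V h) I)
    (hx₀ : x₀ ∈ I) (hx : x ∈ I) : HasDerivAt (Sfun V h x₀) (√(V0 V h x)) x := by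
  have hsqrt : ContinuousOn (fun t => √(V0 V h t)) I := hV₀.sqrt
  have huIcc : Set.uIcc x₀ x ⊆ I := hconn.uIcc_subset hx₀ hx
  exact intervalIntegral.integral_hasDerivAt_right (hsqrt.mono huIcc).intervalIntegrable
    (hsqrt.stronglyMeasurableAtFilter hI x hx) (hsqrt.continuousAt (hI.mem_nhds hx))

theorem psiWKB_eq_liouvilleGreen :
    psiWKB V h x₀ = liouvilleGreen (V0 V h) (Sfun V h x₀) h := rfl

theorem differentiableOn_psiWKB (hI : IsOpen I) (hconn : I.OrdConnected) (hx₀ : x₀ ∈ I)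
    (hV : DifferentiableOn ℝ V I) (hpos : ∀ y ∈ I, 0 < V0 V h y) :
    DifferentiableOn ℝ (psiWKB V h x₀) I := by
  have hV₀ := differentiableOn_V0 hV h
  exact fun y hy => (hasDerivAt_liouvilleGreen (hpos y hy) (hV₀.differentiableAt (hI.mem_nhds hy))
    (hasDerivAt_Sfun hI hconn hV₀.continuousOn hx₀ hy)).differentiableAt.differentiableWithinAt

theorem hasDerivAt_deriv_psiWKB (hI : IsOpen I) (hconn : I.OrdConnected) (hh : h ≠ 0)
    (hx₀ : x₀ ∈ I) (hx : x ∈ I)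
    (hV : DifferentiableOn ℝ V I) (hV' : DifferentiableOn ℝ (deriv V) I) (hpos : 0 < V0 V h x) :
    HasDerivAt (deriv (psiWKB V h x₀)) ((V x / h ^ 2 + V2 V h x) * psiWKB V h x₀ x) x := by
  have hV₀ := differentiableOn_V0 hV h
  have hV₀' := (differentiableOn_deriv_V0 hI hV hV' h).differentiableAt (hI.mem_nhds hx)
  have hS : ∀ᶠ y in 𝓝 x, HasDerivAt (Sfun V h x₀) (√(V0 V h y)) y := by
    filter_upwards [hI.mem_nhds hx] with y hy
      using hasDerivAt_Sfun hI hconn hV₀.continuousOn hx₀ hy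
  have V0_div_sq : V0 V h x / h ^ 2 = V x / h ^ 2 + 1 / 4 * (1 + x ^ 2)⁻¹ := by
    rw [V0]
    field_simp
  rw [psiWKB_eq_liouvilleGreen]
  refine (hasDerivAt_deriv_liouvilleGreen hpos
    (hV₀.eventually_differentiableAt (hI.mem_nhds hx)) hV₀' hS).congr_deriv ?_
  rw [V0_div_sq, V2]
  ring

theorem wkb_correction_equation_equiv_general (hI : IsOpen I) (hconn : I.OrdConnected) (hh : h ≠ 0)
    (hx₀ : x₀ ∈ I) (hx : x ∈ I)
    (hV : DifferentiableOn ℝ V I) (hV' : DifferentiableOn ℝ (deriv V) I)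
    (ha : DifferentiableOn ℝ a I) (ha' : DifferentiableAt ℝ (deriv a) x)
    (hpos : ∀ y ∈ I, 0 < V0 V h y) :
    -h ^ 2 * deriv (deriv fun y => psiWKB V h x₀ y * (1 + h * a y)) x
        + V x * (psiWKB V h x₀ x * (1 + h * a x)) = 0
      ↔ deriv (fun y => deriv a y * psiWKB V h x₀ y ^ 2) x
        = -(V2 V h x) * psiWKB V h x₀ x ^ 2 * (1 / h + a x) := by
  have hInhds := hI.mem_nhds hx
  have hψ'' := hasDerivAt_deriv_psiWKB hI hconn hh hx₀ hx hV hV' (hpos x hx)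
  have hψ := differentiableOn_psiWKB hI hconn hx₀ hV hpos
  exact schrodinger_mul_one_add_iff hh (liouvilleGreen_pos (hpos x hx)).ne'
    (hψ.eventually_differentiableAt hInhds) hψ''.differentiableAt
    (ha.eventually_differentiableAt hInhds) ha' hψ''.deriv

end WKB

/-- with `ψ = ψ̃ (1 + ℏ a)`, `ψ` solves `−ℏ²ψ'' + Vψ = 0` on `I` iff
`(a' ψ̃²)' = −V₂ ψ̃² (1/ℏ + a)` on `I`. -/
theorem wkb_correction_equation_equiv
    (I : Set ℝ) (hIopen : IsOpen I) (hIconv : Convex ℝ I)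
    (V a : ℝ → ℝ) (h x₀ : ℝ) (hh : 0 < h) (hx₀ : x₀ ∈ I)
    (hV : ContDiffOn ℝ 2 V I) (ha : ContDiffOn ℝ 2 a I)
    (hpos : ∀ x ∈ I, 0 < V0 V h x) :
    (∀ x ∈ I,
        -h ^ 2 * deriv (deriv (fun y => psiWKB V h x₀ y * (1 + h * a y))) x
          + V x * (psiWKB V h x₀ x * (1 + h * a x)) = 0)
      ↔ (∀ x ∈ I,
        deriv (fun y => deriv a y * psiWKB V h x₀ y ^ 2) x
          = -(V2 V h x) * psiWKB V h x₀ x ^ 2 * (1 / h + a x)) := by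
  exact forall₂_congr fun x hx =>
    wkb_correction_equation_equiv_general hIopen hIconv.ordConnected hh.ne' hx₀ hx
      (hV.differentiableOn two_ne_zero) (differentiableOn_deriv_of_contDiffOn_two hIopen hV)
      (ha.differentiableOn two_ne_zero)
      ((differentiableOn_deriv_of_contDiffOn_two hIopen ha).differentiableAt (hIopen.mem_nhds hx))
      hpos
end

section
/- There exist x₀ > 0 and, for every integer k ≥ 0, a constant C_{k,μ} such that for all x > x₀ and all 0 < ℏ < 1 the function V₂(x;ℏ) := (1/4)⟨x⟩^{-2} − V₀''(x;ℏ)/(4 V₀(x;ℏ)) + 5 (V₀'(x;ℏ))²/(16 V₀(x;ℏ)²) satisfies |∂_x^k V₂(x;ℏ)| ≤ C_{k,μ} x^{-3-k} (in particular the x^{-2} contributions cancel, leaving x^{-3} decay). Moreover ρ(x) := ∫_{x₀}^{x} V₀(y;ℏ)^{-1/2} |V₂(y;ℏ)| dy is bounded on (x₀,∞) by a constant C(μ) uniformly in 0 < ℏ < 1. -/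
/-!
Let `ℓ` be the logarithmic derivative of `x² V₀`. As `x² V₀ = μ² + ℏ²/4 + O(x⁻¹)` in the symbol
sense, `ℓ` has order `-2`, one better than `V₀'/V₀ = ℓ - 2/x`. Rewritten in terms of `ℓ`, the last
two terms of `V₂` contribute `-x⁻²/4` (which cancels `⟨x⟩⁻²/4` up to order `-4`) plus multiples of
`ℓ'`, `ℓ/x` and `ℓ²`, which have order at most `-3`.
-/

section Symbols

open Asymptotics Filter Set
open scoped ContDiff

/-- The class of symbols of order `m` on `(a, ∞)`, uniform in a parameter `i : ι`: smooth functions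
whose `k`-th derivative is `O(x ^ (m - k))`. Uniformity is expressed by an `IsBigO` on the product
`ι × (a, ∞)`. -/
structure IsUniformSymbol {ι : Type*} (a m : ℝ) (f : ι → ℝ → ℝ) : Prop where
  contDiffOn : ∀ i, ContDiffOn ℝ ∞ (f i) (Ioi a)
  isBigO_iteratedDeriv : ∀ k : ℕ, (fun p : ι × ℝ ↦ iteratedDeriv k (f p.1) p.2)
    =O[𝓟 (Prod.snd ⁻¹' Ioi a)] fun p ↦ p.2 ^ (m - k)

namespace IsUniformSymbol

variable {ι : Type*} {a m n : ℝ} {f g : ι → ℝ → ℝ}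

lemma isBigO (hf : IsUniformSymbol a m f) :
    (fun p : ι × ℝ ↦ f p.1 p.2) =O[𝓟 (Prod.snd ⁻¹' Ioi a)] fun p ↦ p.2 ^ m := by
  simpa using hf.isBigO_iteratedDeriv 0

lemma contDiffAt (hf : IsUniformSymbol a m f) (i : ι) {x : ℝ} (hx : a < x) {k : ℕ} :
    ContDiffAt ℝ k (f i) x :=
  ((hf.contDiffOn i).contDiffAt (Ioi_mem_nhds hx)).of_le (mod_cast le_top)

lemma of_forall_abs_iteratedDeriv_le (ha : 0 ≤ a) {F : ℝ → ℝ} (hF : ContDiffOn ℝ ∞ F (Ioi a))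
    (hbound : ∀ k : ℕ, ∃ C, ∀ x, a < x → |iteratedDeriv k F x| ≤ C * x ^ (m - k)) :
    IsUniformSymbol a m fun _ : ι ↦ F where
  contDiffOn _ := hF
  isBigO_iteratedDeriv k := isBigO_principal.2 <| (hbound k).imp fun C hC p (hp : a < p.2) ↦ by
    have hrpow : 0 ≤ p.2 ^ (m - k) := Real.rpow_nonneg (ha.trans hp.le) _
    simpa only [Real.norm_eq_abs, abs_of_nonneg hrpow] using hC p.2 hp

lemma exists_abs_iteratedDeriv_le (ha : 0 ≤ a) (hf : IsUniformSymbol a m f) (k : ℕ) :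
    ∃ C > 0, ∀ i x, a < x → |iteratedDeriv k (f i) x| ≤ C * x ^ (m - k) := by
  obtain ⟨C, hC, hfC⟩ := (hf.isBigO_iteratedDeriv k).exists_pos
  refine ⟨C, hC, fun i x hx ↦ (isBigOWith_principal.1 hfC (i, x) hx).trans_eq ?_⟩
  rw [Real.norm_of_nonneg (Real.rpow_nonneg (ha.trans hx.le) _)]

lemma mono_order (ha : 1 ≤ a) (hmn : m ≤ n) (hf : IsUniformSymbol a m f) :
    IsUniformSymbol a n f where
  contDiffOn := hf.contDiffOn
  isBigO_iteratedDeriv k := (hf.isBigO_iteratedDeriv k).trans <| .of_norm_eventuallyLE <|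
    eventually_principal.2 fun p (hp : a < p.2) ↦ by
      beta_reduce
      rw [Real.norm_of_nonneg (Real.rpow_nonneg (by linarith) _)]
      exact Real.rpow_le_rpow_of_exponent_le (by linarith) (by linarith)

lemma congr (hf : IsUniformSymbol a m f) (hfg : ∀ i, EqOn (g i) (f i) (Ioi a)) :
    IsUniformSymbol a m g where
  contDiffOn i := (hf.contDiffOn i).congr (hfg i)
  isBigO_iteratedDeriv k := (hf.isBigO_iteratedDeriv k).congr'
    (eventually_principal.2 fun p hp ↦
      ((hfg p.1).iteratedDeriv_of_isOpen isOpen_Ioi k hp).symm) .rfl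

protected lemma deriv (hf : IsUniformSymbol a m f) :
    IsUniformSymbol a (m - 1) fun i ↦ deriv (f i) where
  contDiffOn i := (hf.contDiffOn i).deriv_of_isOpen isOpen_Ioi (by simp)
  isBigO_iteratedDeriv k := by
    have hk : m - 1 - k = m - (k + 1 : ℕ) := by push_cast; ring
    simpa only [hk, iteratedDeriv_succ'] using hf.isBigO_iteratedDeriv (k + 1)

lemma const {c : ι → ℝ} {B : ℝ} (hc : ∀ i, |c i| ≤ B) :
    IsUniformSymbol a 0 fun i _ ↦ c i where
  contDiffOn _ := contDiffOn_const
  isBigO_iteratedDeriv k := by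
    rcases eq_or_ne k 0 with rfl | hk
    · exact isBigO_iff.2 ⟨B, .of_forall fun p ↦ by simpa using hc p.1⟩
    · simpa only [iteratedDeriv_const, hk, if_false] using isBigO_zero _ _

lemma rpow (ha : 0 ≤ a) (s : ℝ) : IsUniformSymbol a s fun (_ : ι) x ↦ x ^ s where
  contDiffOn _ _ hx := (Real.contDiffAt_rpow_const_of_ne (ha.trans_lt hx).ne').contDiffWithinAt
  isBigO_iteratedDeriv k := by
    simpa only [iteratedDeriv_eq_iterate, Real.iter_deriv_rpow_const] using
      isBigO_const_mul_self _ _ _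

lemma add (hf : IsUniformSymbol a m f) (hg : IsUniformSymbol a m g) :
    IsUniformSymbol a m fun i x ↦ f i x + g i x where
  contDiffOn i := (hf.contDiffOn i).add (hg.contDiffOn i)
  isBigO_iteratedDeriv k := ((hf.isBigO_iteratedDeriv k).add (hg.isBigO_iteratedDeriv k)).congr'
    (eventually_principal.2 fun p hp ↦
      (iteratedDeriv_fun_add (hf.contDiffAt p.1 hp) (hg.contDiffAt p.1 hp)).symm) .rfl

lemma const_mul (c : ℝ) (hf : IsUniformSymbol a m f) :
    IsUniformSymbol a m fun i x ↦ c * f i x where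
  contDiffOn i := contDiffOn_const.mul (hf.contDiffOn i)
  isBigO_iteratedDeriv k := by
    simpa only [iteratedDeriv_const_mul_field] using (hf.isBigO_iteratedDeriv k).const_mul_left c

lemma isBigO_iteratedDeriv_mul (ha : 0 ≤ a) {k : ℕ}
    (hf : ∀ i, ContDiffOn ℝ ∞ (f i) (Ioi a)) (hg : ∀ i, ContDiffOn ℝ ∞ (g i) (Ioi a))
    (hfO : ∀ j ≤ k, (fun p : ι × ℝ ↦ iteratedDeriv j (f p.1) p.2)
      =O[𝓟 (Prod.snd ⁻¹' Ioi a)] fun p ↦ p.2 ^ (m - j))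
    (hgO : ∀ j ≤ k, (fun p : ι × ℝ ↦ iteratedDeriv j (g p.1) p.2)
      =O[𝓟 (Prod.snd ⁻¹' Ioi a)] fun p ↦ p.2 ^ (n - j)) :
    (fun p : ι × ℝ ↦ iteratedDeriv k (fun x ↦ f p.1 x * g p.1 x) p.2)
      =O[𝓟 (Prod.snd ⁻¹' Ioi a)] fun p ↦ p.2 ^ (m + n - k) := by
  have leibniz : (fun p : ι × ℝ ↦ iteratedDeriv k (fun x ↦ f p.1 x * g p.1 x) p.2)
      =ᶠ[𝓟 (Prod.snd ⁻¹' Ioi a)] fun p ↦ ∑ j ∈ Finset.range (k + 1),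
        k.choose j * iteratedDeriv j (f p.1) p.2 * iteratedDeriv (k - j) (g p.1) p.2 :=
    eventually_principal.2 fun p hp ↦ iteratedDeriv_fun_mul
      (((hf p.1).contDiffAt (Ioi_mem_nhds hp)).of_le (mod_cast le_top))
      (((hg p.1).contDiffAt (Ioi_mem_nhds hp)).of_le (mod_cast le_top))
  refine leibniz.trans_isBigO (.fun_sum fun j hj ↦ ?_)
  have hjk : j ≤ k := Finset.mem_range_succ_iff.1 hj
  refine (((hfO j hjk).const_mul_left _).mul (hgO (k - j) (k.sub_le j))).congr' .rfl
    (eventually_principal.2 fun p (hp : a < p.2) ↦ ?_)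
  beta_reduce
  rw [← Real.rpow_add (ha.trans_lt hp), Nat.cast_sub hjk]
  ring_nf

lemma mul (ha : 0 ≤ a) (hf : IsUniformSymbol a m f) (hg : IsUniformSymbol a n g) :
    IsUniformSymbol a (m + n) fun i x ↦ f i x * g i x where
  contDiffOn i := (hf.contDiffOn i).mul (hg.contDiffOn i)
  isBigO_iteratedDeriv _ := isBigO_iteratedDeriv_mul ha hf.contDiffOn hg.contDiffOn
    (fun j _ ↦ hf.isBigO_iteratedDeriv j) fun j _ ↦ hg.isBigO_iteratedDeriv j

lemma inv (ha : 0 ≤ a) (hf : IsUniformSymbol a m f)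
    (hell : (fun p : ι × ℝ ↦ p.2 ^ m) =O[𝓟 (Prod.snd ⁻¹' Ioi a)] fun p ↦ f p.1 p.2) :
    IsUniformSymbol a (-m) fun i x ↦ (f i x)⁻¹ := by
  have hne : ∀ i, ∀ x ∈ Ioi a, f i x ≠ 0 := fun i x hx hfx ↦
    (Real.rpow_pos_of_pos (ha.trans_lt hx) m).ne' <|
      eventually_principal.1 hell.eq_zero_imp (i, x) hx hfx
  have hsmooth : ∀ i, ContDiffOn ℝ ∞ (fun x ↦ (f i x)⁻¹) (Ioi a) := fun i ↦
    (hf.contDiffOn i).inv (hne i)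
  have hderiv : ∀ i, EqOn (deriv fun x ↦ (f i x)⁻¹)
      (fun x ↦ -1 * (deriv (f i) x * ((f i x)⁻¹ * (f i x)⁻¹))) (Ioi a) := fun i x hx ↦ by
    have hd := (hf.contDiffAt i hx (k := 1)).differentiableAt one_ne_zero
    rw [deriv_fun_inv'' hd (hne i x hx)]
    field_simp
  refine ⟨hsmooth, fun k ↦ ?_⟩
  -- `(1/f)' = -f' / f²` expresses derivative `k + 1` of `1/f` through those of order at most `k`.
  induction k using Nat.strong_induction_on with
  | _ k ih =>
  rcases k with _ | k
  · refine (hell.inv_rev (eventually_principal.2 fun p hp h ↦ ?_)).congr'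
      (.of_eq (by simp)) (eventually_principal.2 fun p (hp : a < p.2) ↦ ?_)
    · exact absurd h (Real.rpow_pos_of_pos (ha.trans_lt hp) m).ne'
    · beta_reduce
      rw [CharP.cast_eq_zero, sub_zero, Real.rpow_neg (ha.trans hp.le)]
  · have hsq := fun j (hj : j ≤ k) ↦ isBigO_iteratedDeriv_mul ha hsmooth hsmooth
      (fun l hl ↦ ih l (by lia)) (fun l hl ↦ ih l (by lia)) (k := j)
    have hprod := (isBigO_iteratedDeriv_mul ha hf.deriv.contDiffOn
      (fun i ↦ (hsmooth i).mul (hsmooth i))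
      (fun j _ ↦ hf.deriv.isBigO_iteratedDeriv j) hsq).const_mul_left (-1)
    refine hprod.congr' (eventually_principal.2 fun p hp ↦ ?_) (.of_eq (funext fun p ↦ ?_))
    · beta_reduce
      rw [iteratedDeriv_succ', (hderiv p.1).iteratedDeriv_of_isOpen isOpen_Ioi k hp,
        iteratedDeriv_const_mul_field]
    · push_cast
      ring_nf

protected lemma logDeriv (ha : 1 ≤ a) (hm : m ≤ 0) {c : ι → ℝ} {B : ℝ} (hc : ∀ i, |c i| ≤ B)
    (hf : IsUniformSymbol a m fun i x ↦ f i x - c i)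
    (hell : (fun _ : ι × ℝ ↦ (1 : ℝ)) =O[𝓟 (Prod.snd ⁻¹' Ioi a)] fun p ↦ f p.1 p.2) :
    IsUniformSymbol a (m - 1) fun i ↦ logDeriv (f i) := by
  have ha0 : 0 ≤ a := zero_le_one.trans ha
  have hf0 : IsUniformSymbol a 0 f :=
    ((hf.mono_order ha hm).add (const hc)).congr fun i x _ ↦ by ring
  have hinv : IsUniformSymbol a (-0) fun i x ↦ (f i x)⁻¹ := hf0.inv ha0 (by simpa using hell)
  have h := hf.deriv.mul ha0 hinv
  rw [neg_zero, add_zero] at h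
  refine h.congr fun i x _ ↦ ?_
  beta_reduce
  rw [logDeriv_apply, deriv_sub_const, div_eq_mul_inv]

lemma inv_one_add_sq (ha : 1 ≤ a) : IsUniformSymbol a (-2) fun (_ : ι) x ↦ (1 + x ^ 2)⁻¹ := by
  have ha0 : 0 ≤ a := zero_le_one.trans ha
  have hone : IsUniformSymbol a 2 fun (_ : ι) _ ↦ (1 : ℝ) :=
    (const fun _ ↦ le_rfl).mono_order ha zero_le_two
  have hsq : IsUniformSymbol a 2 fun (_ : ι) x ↦ x ^ 2 :=
    (rpow ha0 2).congr fun _ x _ ↦ (Real.rpow_two x).symm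
  refine (hone.add hsq).inv ha0 (.of_bound' (.of_forall fun p ↦ ?_))
  rw [Real.rpow_two, Real.norm_of_nonneg (sq_nonneg _), Real.norm_of_nonneg (by positivity)]
  linarith

lemma inv_one_add_sq_sub_inv_sq (ha : 1 ≤ a) :
    IsUniformSymbol a (-4) fun (_ : ι) x ↦ (1 + x ^ 2)⁻¹ - (x ^ 2)⁻¹ := by
  have ha0 : 0 ≤ a := zero_le_one.trans ha
  have h := ((inv_one_add_sq (ι := ι) ha).mul ha0 (rpow ha0 (-2))).const_mul (-1)
  norm_num only at h
  refine h.congr fun _ x (hx : a < x) ↦ ?_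
  have hx0 : 0 < x := ha0.trans_lt hx
  beta_reduce
  rw [Real.rpow_neg hx0.le, Real.rpow_two]
  field_simp
  ring

end IsUniformSymbol

end Symbols

section LiouvilleGreen

open Asymptotics Filter Set
open scoped ContDiff Topology

/-- The error potential `⟨x⟩⁻²/4 - v''/(4v) + 5v'²/(16v²)` that the Liouville–Green (WKB)
transformation attaches to a potential `v`; `V₂` is this expression for `v = V₀`. -/
noncomputable def liouvilleGreenError (v : ℝ → ℝ) (x : ℝ) : ℝ :=
  1 / 4 * (1 + x ^ 2)⁻¹ - deriv (deriv v) x / (4 * v x) + 5 * (deriv v x) ^ 2 / (16 * (v x) ^ 2)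

lemma logDeriv_sq_mul {v : ℝ → ℝ} {x : ℝ} (hx : x ≠ 0) (hv : DifferentiableAt ℝ v x)
    (hvx : v x ≠ 0) : logDeriv (fun y ↦ y ^ 2 * v y) x = 2 * x⁻¹ + deriv v x / v x := by
  have hmul := logDeriv_mul (f := fun y : ℝ ↦ y ^ 2) x (pow_ne_zero 2 hx) hvx (by fun_prop) hv
  rw [hmul, logDeriv_fun_pow differentiableAt_fun_id, logDeriv_id', logDeriv_apply,
    Nat.cast_ofNat, one_div]

lemma deriv_logDeriv_sq_mul {v : ℝ → ℝ} {x : ℝ} (hx : x ≠ 0) (hv : ContDiffAt ℝ 2 v x)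
    (hvx : v x ≠ 0) :
    deriv (logDeriv fun y ↦ y ^ 2 * v y) x
      = -2 * (x ^ 2)⁻¹ + (deriv (deriv v) x * v x - deriv v x ^ 2) / v x ^ 2 := by
  have hlog : (logDeriv fun y ↦ y ^ 2 * v y) =ᶠ[𝓝 x] fun y ↦ 2 * y⁻¹ + deriv v y / v y := by
    filter_upwards [isOpen_ne.mem_nhds hx, hv.continuousAt.eventually_ne hvx,
      hv.eventually (by simp)] with y hy hvy hdiff
    exact logDeriv_sq_mul hy (hdiff.differentiableAt two_ne_zero) hvy
  have hv' : DifferentiableAt ℝ (deriv v) x :=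
    (hv.derivWithin (m := 1) (by norm_num)).differentiableAt one_ne_zero
  rw [hlog.deriv_eq, (((hasDerivAt_inv hx).const_mul 2).fun_add
    (hv'.hasDerivAt.fun_div (hv.differentiableAt two_ne_zero).hasDerivAt hvx)).deriv]
  ring

lemma liouvilleGreenError_eq_logDeriv {v : ℝ → ℝ} {x : ℝ} (hx : x ≠ 0) (hv : ContDiffAt ℝ 2 v x)
    (hvx : v x ≠ 0) :
    liouvilleGreenError v x = 1 / 4 * ((1 + x ^ 2)⁻¹ - (x ^ 2)⁻¹)
      + -1 / 4 * (deriv (logDeriv fun y ↦ y ^ 2 * v y) x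
        + logDeriv (fun y ↦ y ^ 2 * v y) x * x⁻¹)
      + 1 / 16 * (logDeriv (fun y ↦ y ^ 2 * v y) x * logDeriv (fun y ↦ y ^ 2 * v y) x) := by
  rw [liouvilleGreenError, deriv_logDeriv_sq_mul hx hv hvx,
    logDeriv_sq_mul hx (hv.differentiableAt two_ne_zero) hvx]
  field_simp
  ring

variable {ι : Type*} {a m : ℝ}

lemma contDiffOn_sub_div_sq_iff (ha : 0 ≤ a) {n : WithTop ℕ∞} {v : ℝ → ℝ} {c : ℝ} :
    ContDiffOn ℝ n (fun x ↦ v x - c / x ^ 2) (Ioi a) ↔ ContDiffOn ℝ n v (Ioi a) := by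
  have hsq : ContDiffOn ℝ n (fun x : ℝ ↦ c / x ^ 2) (Ioi a) :=
    contDiffOn_const.div (contDiffOn_id.pow 2) fun x hx ↦ pow_ne_zero 2 (ha.trans_lt hx).ne'
  exact ⟨fun h ↦ (h.add hsq).congr fun x _ ↦ (sub_add_cancel _ _).symm, fun h ↦ h.sub hsq⟩

lemma IsUniformSymbol.liouvilleGreenError (ha : 1 ≤ a) (hm₁ : -4 ≤ m) (hm₂ : m ≤ -2)
    {v : ι → ℝ → ℝ} {c : ι → ℝ} {B : ℝ} (hc : ∀ i, |c i| ≤ B)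
    (hv : IsUniformSymbol a m fun i x ↦ v i x - c i / x ^ 2)
    (hell : (fun _ : ι × ℝ ↦ (1 : ℝ))
      =O[𝓟 (Prod.snd ⁻¹' Ioi a)] fun p ↦ p.2 ^ 2 * v p.1 p.2) :
    IsUniformSymbol a m fun i ↦ liouvilleGreenError (v i) := by
  have ha0 : 0 ≤ a := zero_le_one.trans ha
  have hne : ∀ {x}, x ∈ Ioi a → x ≠ 0 := fun hx ↦ (ha0.trans_lt hx).ne'
  have hw : IsUniformSymbol a (m + 2) fun i x ↦ x ^ 2 * v i x - c i :=
    (hv.mul ha0 (rpow ha0 2)).congr fun i x hx ↦ by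
      have := hne hx
      beta_reduce
      rw [Real.rpow_two]
      field_simp
  have hlog : IsUniformSymbol a (m + 1) fun i ↦ logDeriv fun x ↦ x ^ 2 * v i x := by
    have h := hw.logDeriv ha (by linarith) hc hell
    rwa [show m + 2 - 1 = m + 1 by ring] at h
  have hlog_deriv := hlog.deriv
  have hlog_div := hlog.mul ha0 (rpow ha0 (-1))
  have hlog_sq := (hlog.mul ha0 hlog).mono_order ha (show m + 1 + (m + 1) ≤ m by linarith)
  rw [show m + 1 - 1 = m by ring] at hlog_deriv
  rw [show m + 1 + -1 = m by ring] at hlog_div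
  have hlead := (inv_one_add_sq_sub_inv_sq (ι := ι) ha).mono_order ha hm₁
  refine (((hlead.const_mul (1 / 4)).add ((hlog_deriv.add hlog_div).const_mul (-1 / 4))).add
    (hlog_sq.const_mul (1 / 16))).congr fun i x hx ↦ ?_
  have hv2 : ContDiffAt ℝ 2 (v i) x :=
    ((contDiffOn_sub_div_sq_iff ha0).1 (hv.contDiffOn i) |>.contDiffAt (Ioi_mem_nhds hx)).of_le
      ENat.LEInfty.out
  have hvx : v i x ≠ 0 := fun h ↦ one_ne_zero <|
    eventually_principal.1 hell.eq_zero_imp (i, x) hx (by simp [h])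
  beta_reduce
  rw [Real.rpow_neg_one]
  exact liouvilleGreenError_eq_logDeriv (hne hx) hv2 hvx

end LiouvilleGreen

section Estimates

open Asymptotics Filter MeasureTheory Set
open scoped Topology

variable {ι : Type*} {a c m δ : ℝ} {V : ℝ → ℝ}

lemma tendsto_sq_mul_of_isBigO_sub_div_sq (hm : m < -2)
    (hV : (fun x ↦ V x - c / x ^ 2) =O[atTop] fun x ↦ x ^ m) :
    Tendsto (fun x ↦ x ^ 2 * V x) atTop (𝓝 c) := by
  have hzero : Tendsto (fun x ↦ x ^ 2 * (V x - c / x ^ 2)) atTop (𝓝 0) := by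
    refine (((isBigO_refl (fun x : ℝ ↦ x ^ 2) atTop).mul hV).congr' .rfl ?_).trans_tendsto
      (tendsto_rpow_neg_atTop (y := -(m + 2)) (by linarith))
    filter_upwards [eventually_gt_atTop 0] with x hx
    rw [neg_neg, add_comm, Real.rpow_add hx, Real.rpow_two]
  rw [← zero_add c]
  refine (hzero.add_const c).congr' ?_
  filter_upwards [eventually_ne_atTop 0] with x hx
  field_simp
  ring

lemma isBigO_abs_div_sqrt (ha : 0 ≤ a) (hδ : 0 < δ) {f v : ι → ℝ → ℝ}
    (hf : (fun p : ι × ℝ ↦ f p.1 p.2) =O[𝓟 (Prod.snd ⁻¹' Ioi a)] fun p ↦ p.2 ^ m)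
    (hv : ∀ i x, a < x → δ ≤ x ^ 2 * v i x) :
    (fun p : ι × ℝ ↦ |f p.1 p.2| / √(v p.1 p.2))
      =O[𝓟 (Prod.snd ⁻¹' Ioi a)] fun p ↦ p.2 ^ (m + 1) := by
  have hsqrt : (fun p : ι × ℝ ↦ (√(v p.1 p.2))⁻¹) =O[𝓟 (Prod.snd ⁻¹' Ioi a)] Prod.snd := by
    refine isBigO_principal.2 ⟨(√δ)⁻¹, fun ⟨i, x⟩ hx ↦ ?_⟩
    have hx0 : 0 < x := ha.trans_lt hx
    have hle : √δ ≤ x * √(v i x) := by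
      rw [← Real.sqrt_sq hx0.le, ← Real.sqrt_mul (sq_nonneg x)]
      exact Real.sqrt_le_sqrt (by simpa [hx0.le] using hv i x hx)
    have hpos : 0 < √(v i x) := pos_of_mul_pos_right ((Real.sqrt_pos.2 hδ).trans_le hle) hx0.le
    rw [Real.norm_of_nonneg (by positivity), Real.norm_of_nonneg hx0.le,
      inv_mul_eq_div, inv_eq_one_div, div_le_div_iff₀ hpos (Real.sqrt_pos.2 hδ)]
    linarith
  refine (hf.abs_left.mul hsqrt).congr' (.of_eq rfl)
    (eventually_principal.2 fun p (hp : a < p.2) ↦ ?_)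
  exact (Real.rpow_add_one (ha.trans_lt hp).ne' m).symm

lemma exists_integral_le_of_isBigO_rpow (ha : 0 < a) (hm : m < -1) {g : ι → ℝ → ℝ}
    (hg : ∀ i, AEStronglyMeasurable (g i) (volume.restrict (Ioi a)))
    (hgO : (fun p : ι × ℝ ↦ g p.1 p.2) =O[𝓟 (Prod.snd ⁻¹' Ioi a)] fun p ↦ p.2 ^ m) :
    ∃ C > 0, ∀ i, IntegrableOn (g i) (Ioi a) ∧ ∀ x, a < x → ∫ y in a..x, g i y ≤ C := by
  obtain ⟨C, hC⟩ := isBigO_principal.1 hgO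
  have hdom : IntegrableOn (fun y ↦ C * ‖y ^ m‖) (Ioi a) :=
    (integrableOn_Ioi_rpow_of_lt hm ha).norm.const_mul C
  have hbound : ∀ i, ∀ᵐ y ∂volume.restrict (Ioi a), ‖g i y‖ ≤ C * ‖y ^ m‖ := fun i ↦
    (ae_restrict_mem measurableSet_Ioi).mono fun y hy ↦ hC (i, y) hy
  have hint : ∀ i, IntegrableOn (g i) (Ioi a) := fun i ↦ hdom.mono' (hg i) (hbound i)
  refine ⟨max (∫ y in Ioi a, C * ‖y ^ m‖) 1, lt_max_of_lt_right one_pos, fun i ↦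
    ⟨hint i, fun x hx ↦ le_max_of_le_left ?_⟩⟩
  calc ∫ y in a..x, g i y
      ≤ ∫ y in Ioc a x, ‖g i y‖ := by
        rw [intervalIntegral.integral_of_le hx.le]
        exact (Real.le_norm_self _).trans (norm_integral_le_integral_norm _)
    _ ≤ ∫ y in Ioi a, ‖g i y‖ :=
        setIntegral_mono_set (hint i).norm (.of_forall fun _ ↦ norm_nonneg _)
          Ioc_subset_Ioi_self.eventuallyLE
    _ ≤ ∫ y in Ioi a, C * ‖y ^ m‖ := setIntegral_mono_ae_restrict (hint i).norm hdom (hbound i)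

end Estimates

section Potential

open Asymptotics Filter MeasureTheory Set
open scoped ContDiff

variable {a c m δ : ℝ} {S : Set ℝ} {V : ℝ → ℝ}

lemma exists_half_le_sq_mul (hc : 0 < c) (hm : m < -2) {b : ℝ}
    (hV : (fun x ↦ V x - c / x ^ 2) =O[atTop] fun x ↦ x ^ m) :
    ∃ a ≥ b, 1 ≤ a ∧ ∀ x, a < x → c / 2 ≤ x ^ 2 * V x := by
  have hlim := tendsto_sq_mul_of_isBigO_sub_div_sq hm hV
  obtain ⟨a, ha⟩ := eventually_atTop.1 (hlim.eventually_const_le (half_lt_self hc))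
  exact ⟨max a (max b 1), by simp, by simp, fun x hx ↦ ha x (le_of_max_le_left hx.le)⟩

lemma le_sq_mul_V0 {x : ℝ} (hV : δ ≤ x ^ 2 * V x) (h : ℝ) : δ ≤ x ^ 2 * V0 V h x := by
  have : 0 ≤ x ^ 2 * (h ^ 2 / 4 * (1 + x ^ 2)⁻¹) := by positivity
  rw [V0, mul_add]
  linarith

lemma exists_abs_sq_div_four_le (hS : Bornology.IsBounded S) :
    ∃ B, ∀ h : S, |(h : ℝ) ^ 2 / 4| ≤ B := by
  obtain ⟨H, hH⟩ := hS.exists_norm_le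
  refine ⟨H ^ 2 / 4, fun h ↦ ?_⟩
  rw [abs_of_nonneg (by positivity)]
  gcongr ?_ / 4
  exact sq_le_sq' (neg_le_of_abs_le (hH h h.2)) (le_of_abs_le (hH h h.2))

lemma isUniformSymbol_V0_sub (ha : 1 ≤ a) (hm : -4 ≤ m) (hS : Bornology.IsBounded S)
    (hV : IsUniformSymbol a m fun (_ : S) x ↦ V x - c / x ^ 2) :
    IsUniformSymbol a m fun (h : S) x ↦ V0 V h x - (c + (h : ℝ) ^ 2 / 4) / x ^ 2 := by
  obtain ⟨B, hB⟩ := exists_abs_sq_div_four_le hS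
  have hcorr := (IsUniformSymbol.const hB).mul (zero_le_one.trans ha)
    ((IsUniformSymbol.inv_one_add_sq_sub_inv_sq ha).mono_order ha hm)
  rw [zero_add] at hcorr
  refine (hV.add hcorr).congr fun h x _ ↦ ?_
  simp only [V0]
  ring

lemma isUniformSymbol_V2 (ha : 1 ≤ a) (hm₁ : -4 ≤ m) (hm₂ : m ≤ -2)
    (hS : Bornology.IsBounded S) (hδ : 0 < δ) (hVδ : ∀ x, a < x → δ ≤ x ^ 2 * V x)
    (hV : IsUniformSymbol a m fun (_ : S) x ↦ V x - c / x ^ 2) :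
    IsUniformSymbol a m fun h : S ↦ V2 V h := by
  obtain ⟨B, hB⟩ := exists_abs_sq_div_four_le hS
  have hell : (fun _ : S × ℝ ↦ (1 : ℝ))
      =O[𝓟 (Prod.snd ⁻¹' Ioi a)] fun p ↦ p.2 ^ 2 * V0 V p.1 p.2 :=
    isBigO_principal.2 ⟨δ⁻¹, fun p hp ↦ by
      rw [norm_one, inv_mul_eq_div, le_div_iff₀ hδ, one_mul]
      exact (le_sq_mul_V0 (hVδ p.2 hp) p.1).trans (le_abs_self _)⟩
  exact IsUniformSymbol.liouvilleGreenError ha hm₁ hm₂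
    (fun h ↦ (abs_add_le _ _).trans (add_le_add_right (hB h) |c|))
    (isUniformSymbol_V0_sub ha hm₁ hS hV) hell

lemma exists_integral_abs_V2_div_sqrt_V0_le (ha : 1 ≤ a) (hm₁ : -4 ≤ m) (hm₂ : m < -2)
    (hS : Bornology.IsBounded S) (hδ : 0 < δ) (hVδ : ∀ x, a < x → δ ≤ x ^ 2 * V x)
    (hV : IsUniformSymbol a m fun (_ : S) x ↦ V x - c / x ^ 2) :
    ∃ C > 0, ∀ h : S, IntegrableOn (fun y ↦ |V2 V h y| / √(V0 V h y)) (Ioi a) ∧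
      ∀ x, a < x → ∫ y in a..x, |V2 V h y| / √(V0 V h y) ≤ C := by
  have ha0 : 0 < a := one_pos.trans_le ha
  have hV2 := isUniformSymbol_V2 ha hm₁ hm₂.le hS hδ hVδ hV
  have hV0 : ∀ h : S, ContDiffOn ℝ ∞ (V0 V h) (Ioi a) := fun h ↦
    (contDiffOn_sub_div_sq_iff ha0.le).1 ((isUniformSymbol_V0_sub ha hm₁ hS hV).contDiffOn h)
  refine exists_integral_le_of_isBigO_rpow ha0 (show m + 1 < -1 by linarith) (fun h ↦ ?_) <|
    isBigO_abs_div_sqrt (f := fun h : S ↦ V2 V h) (v := fun h ↦ V0 V h) ha0.le hδ hV2.isBigO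
      fun h x hx ↦ le_sq_mul_V0 (hVδ x hx) h
  exact ((hV2.contDiffOn h).continuousOn.norm.aemeasurable measurableSet_Ioi).div
    ((hV0 h).continuousOn.sqrt.aemeasurable measurableSet_Ioi) |>.aestronglyMeasurable

theorem V2_cubic_decay_and_rho_bounded_general {b : ℝ} (hc : 0 < c) (hm : m ∈ Ico (-4) (-2))
    (hVsmooth : ContDiffOn ℝ ∞ V (Ioi b))
    (hVp : ∀ k : ℕ, ∃ C, ∀ x, b < x →
      |iteratedDeriv k (fun t ↦ V t - c / t ^ 2) x| ≤ C * x ^ (m - k)) :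
    ∃ x₀ > 0, (∀ x, x₀ < x → 0 < V x) ∧ ∀ S : Set ℝ, Bornology.IsBounded S →
      (∀ k : ℕ, ∃ C > 0, ∀ h ∈ S, ∀ x, x₀ < x →
        |iteratedDeriv k (V2 V h) x| ≤ C * x ^ (m - k)) ∧
      ∃ C > 0, ∀ h ∈ S, IntegrableOn (fun y ↦ |V2 V h y| / √(V0 V h y)) (Ioi x₀) ∧
        ∀ x, x₀ < x → ∫ y in x₀..x, |V2 V h y| / √(V0 V h y) ≤ C := by
  obtain ⟨hm₁, hm₂⟩ := hm
  obtain ⟨C, hC⟩ := hVp 0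
  have hbigO : (fun x ↦ V x - c / x ^ 2) =O[atTop] fun x ↦ x ^ m := by
    refine .of_bound C ?_
    filter_upwards [eventually_gt_atTop b, eventually_ge_atTop 0] with x hbx hx
    simpa [abs_of_nonneg (Real.rpow_nonneg hx m)] using hC x hbx
  obtain ⟨a, hba, ha, hVc⟩ := exists_half_le_sq_mul (b := b) hc hm₂ hbigO
  have ha0 : 0 < a := one_pos.trans_le ha
  have hV : ∀ S : Set ℝ, IsUniformSymbol a m fun (_ : S) x ↦ V x - c / x ^ 2 := fun S ↦
    .of_forall_abs_iteratedDeriv_le ha0.le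
      ((contDiffOn_sub_div_sq_iff ha0.le).2 (hVsmooth.mono (Ioi_subset_Ioi hba)))
      fun k ↦ (hVp k).imp fun C hC x hx ↦ hC x (hba.trans_lt hx)
  refine ⟨a, ha0, fun x hx ↦ ?_, fun S hS ↦ ⟨fun k ↦ ?_, ?_⟩⟩
  · exact pos_of_mul_pos_right ((half_pos hc).trans_le (hVc x hx)) (sq_nonneg x)
  · have hV2 := isUniformSymbol_V2 ha hm₁ hm₂.le hS (half_pos hc) hVc (hV S)
    simpa only [Subtype.forall] using hV2.exists_abs_iteratedDeriv_le ha0.le k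
  · simpa only [Subtype.forall] using
      exists_integral_abs_V2_div_sqrt_V0_le ha hm₁ hm₂ hS (half_pos hc) hVc (hV S)

end Potential

/-- there exist `x₀ > 0` and constants `C_{k,μ}` such that for `x > x₀` and
`0 < ℏ < 1` one has `|∂_x^k V₂(x;ℏ)| ≤ C_{k,μ} x^{−3−k}` (the `x⁻²` contributions cancel),
and `ρ(x) = ∫_{x₀}^x V₀^{-1/2}|V₂|` is bounded on `(x₀,∞)` uniformly in `0 < ℏ < 1`. -/
theorem V2_cubic_decay_and_rho_bounded
    (V : ℝ → ℝ) (μ : ℝ) (hμ : 0 < μ)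
    (hVsmooth : ∀ n : ℕ, ContDiff ℝ n V)
    (hVp : ∀ k : ℕ, ∃ C > 0, ∀ x : ℝ, 1 ≤ x →
      |iteratedDeriv k (fun t => V t - μ ^ 2 / t ^ 2) x| ≤ C * x ^ (-3 - k : ℝ)) :
    ∃ x₀ > 0, (∀ x, x₀ < x → 0 < V x) ∧
      (∀ k : ℕ, ∃ C > 0, ∀ h ∈ Set.Ioo (0 : ℝ) 1, ∀ x, x₀ < x →
        |iteratedDeriv k (V2 V h) x| ≤ C * x ^ (-3 - k : ℝ)) ∧
      (∃ C > 0, ∀ h ∈ Set.Ioo (0 : ℝ) 1, ∀ x, x₀ < x →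
        (∫ y in x₀..x, |V2 V h y| / Real.sqrt (V0 V h y)) ≤ C) := by
  obtain ⟨x₀, hx₀, hpos, hS⟩ := V2_cubic_decay_and_rho_bounded_general (pow_pos hμ 2)
    (show (-3 : ℝ) ∈ Set.Ico (-4) (-2) by norm_num) (contDiff_infty.2 hVsmooth).contDiffOn
    fun k ↦ (hVp k).imp fun _ hC x hx ↦ hC.2 x hx.le
  obtain ⟨hdecay, C, hC, hρ⟩ := hS _ (Metric.isBounded_Ioo 0 1)
  exact ⟨x₀, hx₀, hpos, hdecay, C, hC, fun h hh ↦ (hρ h hh).2⟩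
end

section
/- If V > 0, there is no zero-energy resonance: if f : ℝ → ℝ is a twice continuously differentiable solution of −ℏ² f''(x) + V(x) f(x) = 0 which satisfies the subordinate growth bounds f(x) = O(|x|^{1/2 − α_±}) as x → ±∞, where α_± := √(1/4 + μ_±² ℏ^{-2}) > 1/2, then f is identically zero. -/
/-!
Since `f'' = ħ⁻² V f` with `V ≥ 0`, we have `⟪f, f''⟫ ≥ 0`, and this makes `√(1 + ‖f‖²)` convex
(unlike `‖f‖`, it is also smooth at the zeros of `f`). A convex function on `ℝ` that is `o(|x|)` at
both ends is constant, because its secant slopes based at any point are monotone and tend to `0`.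
Hence `‖f‖` is constant; differentiating `‖f‖²` twice gives `‖f'‖² + ⟪f, f''⟫ = 0`, so `f' = 0`, and
the equation at a point where `V > 0` forces `f = 0`. Subordinate solutions qualify, as
`1 / 2 - α < 1` makes them `o(|x|)`.
-/

open Asymptotics Bornology Filter Set Topology
open scoped InnerProductSpace

section Growth

variable {E : Type*} [NormedAddCommGroup E] {l : Filter ℝ}

theorem isLittleO_id_of_norm_le_const_mul_abs_rpow {f : ℝ → E} {C p : ℝ} (hl : l ≤ cobounded ℝ)
    (hp : p < 1) (hf : ∀ᶠ x in l, ‖f x‖ ≤ C * |x| ^ p) : f =o[l] id := by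
  have hrpow : (fun r : ℝ ↦ r ^ p) =o[atTop] (fun r ↦ r) := by
    refine isLittleO_of_tendsto' ((eventually_ne_atTop 0).mono fun r hr h0 ↦ absurd h0 hr) ?_
    refine (tendsto_rpow_neg_atTop (sub_pos.2 hp)).congr' ?_
    filter_upwards [eventually_gt_atTop 0] with r hr
    rw [neg_sub, Real.rpow_sub_one hr.ne']
  have habs : Tendsto (fun x : ℝ ↦ |x|) l atTop := tendsto_norm_cobounded_atTop.mono_left hl
  have hO : f =O[l] fun x ↦ |x| ^ p :=
    .of_bound C <| hf.mono fun x hx ↦ by rwa [Real.norm_of_nonneg (by positivity)]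
  exact (hO.trans_isLittleO (hrpow.comp_tendsto habs)).of_abs_right

theorem isLittleO_sqrt_one_add_norm_sq_id {f : ℝ → E} (hl : l ≤ cobounded ℝ) (hf : f =o[l] id) :
    (fun x ↦ √(1 + ‖f x‖ ^ 2)) =o[l] id := by
  have hle : (fun x ↦ √(1 + ‖f x‖ ^ 2)) =O[l] fun x ↦ 1 + ‖f x‖ := .of_norm_le fun x ↦ by
    rw [Real.norm_of_nonneg (Real.sqrt_nonneg _)]
    exact sqrt_one_add_norm_sq_le (f x)
  exact hle.trans_isLittleO (((isLittleO_const_id_cobounded (1 : ℝ)).mono hl).add hf.norm_left)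

theorem tendsto_slope_zero_of_isLittleO_id [NormedSpace ℝ E] {g : ℝ → E} (hl : l ≤ cobounded ℝ)
    (hg : g =o[l] id) (x : ℝ) : Tendsto (slope g x) l (𝓝 0) := by
  have hnum : (fun z ↦ g z - g x) =o[l] id :=
    hg.sub ((isLittleO_const_id_cobounded (g x)).mono hl)
  have hden : id =O[l] fun z ↦ z - x :=
    ((isLittleO_const_id_cobounded x).mono hl).right_isBigO_sub
  exact (hnum.trans_isBigO hden).tendsto_inv_smul_nhds_zero

end Growth

section Convexity

variable {s : Set ℝ} {g : ℝ → ℝ}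

theorem antitoneOn_of_convexOn_of_isLittleO_id (hg : ConvexOn ℝ s g) (hs : s ∈ atTop)
    (hgo : g =o[atTop] id) : AntitoneOn g s := by
  intro x hx y hy hxy
  obtain rfl | hlt := hxy.eq_or_lt
  · rfl
  have hslope : ∀ᶠ z in atTop, slope g x y ≤ slope g x z := by
    filter_upwards [hs, eventually_ge_atTop y] with z hz hyz
    exact hg.slope_mono hx ⟨hy, hlt.ne'⟩ ⟨hz, (hlt.trans_le hyz).ne'⟩ hyz
  have hnonpos : slope g x y ≤ 0 := ge_of_tendsto
    (tendsto_slope_zero_of_isLittleO_id IsOrderBornology.atTop_le_cobounded hgo x) hslope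
  exact (slope_nonpos_iff_of_le hxy).1 hnonpos

theorem monotoneOn_of_convexOn_of_isLittleO_id (hg : ConvexOn ℝ s g) (hs : s ∈ atBot)
    (hgo : g =o[atBot] id) : MonotoneOn g s := by
  intro x hx y hy hxy
  obtain rfl | hlt := hxy.eq_or_lt
  · rfl
  have hslope : ∀ᶠ z in atBot, slope g y z ≤ slope g y x := by
    filter_upwards [hs, eventually_le_atBot x] with z hz hzx
    exact hg.slope_mono hy ⟨hz, (hzx.trans_lt hlt).ne⟩ ⟨hx, hlt.ne⟩ hzx
  have hnonneg : 0 ≤ slope g y x := le_of_tendsto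
    (tendsto_slope_zero_of_isLittleO_id IsOrderBornology.atBot_le_cobounded hgo y) hslope
  rw [slope_comm] at hnonneg
  exact (slope_nonneg_iff_of_le hxy).1 hnonneg

theorem eq_of_convexOn_univ_of_isLittleO_id (hg : ConvexOn ℝ univ g) (htop : g =o[atTop] id)
    (hbot : g =o[atBot] id) (x y : ℝ) : g x = g y := by
  have hanti := antitoneOn_univ.1 (antitoneOn_of_convexOn_of_isLittleO_id hg univ_mem htop)
  have hmono := monotoneOn_univ.1 (monotoneOn_of_convexOn_of_isLittleO_id hg univ_mem hbot)
  obtain hxy | hyx := le_total x y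
  · exact (hmono hxy).antisymm (hanti hxy)
  · exact (hanti hyx).antisymm (hmono hyx)

end Convexity

section InnerDerivTwo

variable {E : Type*} [NormedAddCommGroup E] [InnerProductSpace ℝ E] {f f' f'' : ℝ → E}

theorem hasDerivAt_sqrt_one_add_norm_sq {v : E} {x : ℝ} (hf : HasDerivAt f v x) :
    HasDerivAt (fun t ↦ √(1 + ‖f t‖ ^ 2)) (⟪f x, v⟫_ℝ / √(1 + ‖f x‖ ^ 2)) x := by
  convert (hf.norm_sq.const_add 1).sqrt (by positivity) using 1
  rw [mul_div_mul_left _ _ two_ne_zero]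

theorem inner_mul_inner_div_sqrt_one_add_norm_sq_le (u v : E) :
    ⟪u, v⟫_ℝ * (⟪u, v⟫_ℝ / √(1 + ‖u‖ ^ 2)) ≤ ‖v‖ ^ 2 * √(1 + ‖u‖ ^ 2) := by
  have hpos : 0 < √(1 + ‖u‖ ^ 2) := by positivity
  rw [← mul_div_assoc, div_le_iff₀ hpos, mul_assoc, Real.mul_self_sqrt (by positivity)]
  calc ⟪u, v⟫_ℝ * ⟪u, v⟫_ℝ ≤ ‖v‖ ^ 2 * ‖u‖ ^ 2 := by
        rw [mul_comm (‖v‖ ^ 2), ← real_inner_self_eq_norm_sq, ← real_inner_self_eq_norm_sq]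
        exact real_inner_mul_inner_self_le u v
    _ ≤ ‖v‖ ^ 2 * (1 + ‖u‖ ^ 2) := by gcongr; linarith

theorem convexOn_sqrt_one_add_norm_sq_of_inner_nonneg {D : Set ℝ} (hD : Convex ℝ D)
    (hcont : ContinuousOn f D) (hf : ∀ x ∈ interior D, HasDerivAt f (f' x) x)
    (hf' : ∀ x ∈ interior D, HasDerivAt f' (f'' x) x)
    (hinner : ∀ x ∈ interior D, 0 ≤ ⟪f x, f'' x⟫_ℝ) :
    ConvexOn ℝ D fun x ↦ √(1 + ‖f x‖ ^ 2) := by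
  refine convexOn_of_hasDerivWithinAt2_nonneg hD (by fun_prop)
    (fun x hx ↦ (hasDerivAt_sqrt_one_add_norm_sq (hf x hx)).hasDerivWithinAt)
    (fun x hx ↦ (((hf x hx).inner ℝ (hf' x hx)).div
      (hasDerivAt_sqrt_one_add_norm_sq (hf x hx)) (by positivity)).hasDerivWithinAt)
    fun x hx ↦ div_nonneg (sub_nonneg.2 ?_) (by positivity)
  calc ⟪f x, f' x⟫_ℝ * (⟪f x, f' x⟫_ℝ / √(1 + ‖f x‖ ^ 2))
      ≤ ‖f' x‖ ^ 2 * √(1 + ‖f x‖ ^ 2) := inner_mul_inner_div_sqrt_one_add_norm_sq_le _ _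
    _ ≤ (⟪f x, f'' x⟫_ℝ + ⟪f' x, f' x⟫_ℝ) * √(1 + ‖f x‖ ^ 2) := by
        rw [real_inner_self_eq_norm_sq]
        gcongr
        exact le_add_of_nonneg_left (hinner x hx)

theorem deriv_eq_zero_of_norm_eq_const_of_inner_nonneg {c x : ℝ} {v : E}
    (hf : ∀ y, HasDerivAt f (f' y) y) (hf' : HasDerivAt f' v x) (hinner : 0 ≤ ⟪f x, v⟫_ℝ)
    (hnorm : ∀ y, ‖f y‖ = c) : f' x = 0 := by
  have horth (y : ℝ) : ⟪f y, f' y⟫_ℝ = 0 := by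
    have hsq := (hf y).norm_sq
    simp only [hnorm] at hsq
    linarith [hsq.unique (hasDerivAt_const y _)]
  have hsum : ⟪f x, v⟫_ℝ + ⟪f' x, f' x⟫_ℝ = 0 := by
    have hder := (hf x).inner ℝ hf'
    simp only [horth] at hder
    exact hder.unique (hasDerivAt_const x 0)
  have hself : ⟪f' x, f' x⟫_ℝ = 0 := by linarith [real_inner_self_nonneg (x := f' x)]
  exact inner_self_eq_zero.1 hself

theorem deriv_eq_zero_of_inner_nonneg_of_isLittleO_id (hf : ∀ x, HasDerivAt f (f' x) x)
    (hf' : ∀ x, HasDerivAt f' (f'' x) x) (hinner : ∀ x, 0 ≤ ⟪f x, f'' x⟫_ℝ)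
    (htop : f =o[atTop] id) (hbot : f =o[atBot] id) (x : ℝ) : f' x = 0 := by
  have hconv : ConvexOn ℝ univ fun x ↦ √(1 + ‖f x‖ ^ 2) :=
    convexOn_sqrt_one_add_norm_sq_of_inner_nonneg convex_univ
      (continuous_iff_continuousAt.2 fun x ↦ (hf x).continuousAt).continuousOn
      (fun x _ ↦ hf x) (fun x _ ↦ hf' x) (fun x _ ↦ hinner x)
  have hnorm (y : ℝ) : ‖f y‖ = ‖f 0‖ := by
    have heq := eq_of_convexOn_univ_of_isLittleO_id hconv
      (isLittleO_sqrt_one_add_norm_sq_id IsOrderBornology.atTop_le_cobounded htop)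
      (isLittleO_sqrt_one_add_norm_sq_id IsOrderBornology.atBot_le_cobounded hbot) y 0
    rw [Real.sqrt_inj (by positivity) (by positivity), add_right_inj] at heq
    exact (sq_eq_sq₀ (norm_nonneg _) (norm_nonneg _)).1 heq
  exact deriv_eq_zero_of_norm_eq_const_of_inner_nonneg hf (hf' x) (hinner x) hnorm

end InnerDerivTwo

theorem no_zero_energy_resonance_general {E : Type*} [NormedAddCommGroup E]
    [InnerProductSpace ℝ E] {V : ℝ → ℝ} {h : ℝ} {f : ℝ → E} (hh : h ≠ 0) (hV : ∀ x, 0 ≤ V x)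
    (hVne : ∃ x, V x ≠ 0) (hf : Differentiable ℝ f) (hf' : Differentiable ℝ (deriv f))
    (hode : ∀ x, -h ^ 2 • deriv (deriv f) x + V x • f x = 0)
    (htop : f =o[atTop] id) (hbot : f =o[atBot] id) (x : ℝ) : f x = 0 := by
  have hinner (y : ℝ) : 0 ≤ ⟪f y, deriv (deriv f) y⟫_ℝ := by
    have hmul : h ^ 2 * ⟪f y, deriv (deriv f) y⟫_ℝ = V y * ‖f y‖ ^ 2 := by
      have hzero := congrArg (⟪f y, ·⟫_ℝ) (hode y)
      simp only [inner_add_right, real_inner_smul_right, real_inner_self_eq_norm_sq,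
        inner_zero_right] at hzero
      linarith
    refine nonneg_of_mul_nonneg_right (hmul ▸ ?_) (by positivity : 0 < h ^ 2)
    exact mul_nonneg (hV y) (sq_nonneg _)
  have hderiv (y : ℝ) : deriv f y = 0 := deriv_eq_zero_of_inner_nonneg_of_isLittleO_id
    (fun x ↦ (hf x).hasDerivAt) (fun x ↦ (hf' x).hasDerivAt) hinner htop hbot y
  obtain ⟨x₀, hx₀⟩ := hVne
  have hfx₀ : f x₀ = 0 := by simpa [funext hderiv, hx₀] using hode x₀
  rw [is_const_of_deriv_eq_zero hf hderiv x x₀, hfx₀]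

/-- if `V > 0` there is no zero-energy resonance: any `C²` solution of
`−ℏ²f'' + Vf = 0` which is subordinate at both ends, i.e. `f(x) = O(|x|^{1/2−α_±})` as
`x → ±∞` with `α_± = √(1/4 + μ_±²ℏ⁻²) > 1/2`, vanishes identically. -/
theorem no_zero_energy_resonance
    (V : ℝ → ℝ) (μp μm h : ℝ) (hh : 0 < h)
    (hVcont : Continuous V) (hVpos : ∀ x, 0 < V x)
    (hμp : μp ≠ 0) (hμm : μm ≠ 0)
    (hVp : ∃ C > 0, ∀ x : ℝ, 1 ≤ x → |V x - μp ^ 2 / x ^ 2| ≤ C * x ^ (-3 : ℝ))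
    (hVm : ∃ C > 0, ∀ x : ℝ, x ≤ -1 → |V x - μm ^ 2 / x ^ 2| ≤ C * |x| ^ (-3 : ℝ))
    (f : ℝ → ℝ) (hf : ContDiff ℝ 2 f)
    (hode : ∀ x, -h ^ 2 * deriv (deriv f) x + V x * f x = 0)
    (hsubp : ∃ C > 0, ∀ x : ℝ, 1 ≤ x →
      |f x| ≤ C * x ^ ((1 : ℝ) / 2 - Real.sqrt (1 / 4 + μp ^ 2 / h ^ 2)))
    (hsubm : ∃ C > 0, ∀ x : ℝ, x ≤ -1 →
      |f x| ≤ C * |x| ^ ((1 : ℝ) / 2 - Real.sqrt (1 / 4 + μm ^ 2 / h ^ 2))) :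
    ∀ x, f x = 0 := by
  obtain ⟨Cp, -, hCp⟩ := hsubp
  obtain ⟨Cm, -, hCm⟩ := hsubm
  have hexp (μ : ℝ) : (1 : ℝ) / 2 - √(1 / 4 + μ ^ 2 / h ^ 2) < 1 := by
    linarith [Real.sqrt_nonneg (1 / 4 + μ ^ 2 / h ^ 2)]
  have htop : f =o[atTop] id := by
    refine isLittleO_id_of_norm_le_const_mul_abs_rpow (C := Cp)
      IsOrderBornology.atTop_le_cobounded (hexp μp) ?_
    filter_upwards [eventually_ge_atTop 1] with x hx
    rw [abs_of_nonneg (by positivity)]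
    exact hCp x hx
  have hbot : f =o[atBot] id := isLittleO_id_of_norm_le_const_mul_abs_rpow
    IsOrderBornology.atBot_le_cobounded (hexp μm) ((eventually_le_atBot (-1)).mono hCm)
  exact no_zero_energy_resonance_general hh.ne' (fun x ↦ (hVpos x).le) ⟨0, (hVpos 0).ne'⟩
    (hf.differentiable two_ne_zero) ((hf.iterate_deriv' 1 1).differentiable one_ne_zero)
    hode htop hbot
end

section
/- There exists E₀ = E₀(V) > 0 such that for all 0 < E < E₀ the following hold: the equation V₀(x;ℏ) − E = 0 has a unique solution x₁ = x₁(E;ℏ) on x > 0, and this zero is simple. With Q₀(x) := V₀(x;ℏ) − E, the function ζ(x,E;ℏ) := sign(x − x₁) | (3/2) ∫_{x₁}^{x} √|Q₀(u)| du |^{2/3} defines a smooth change of variables on x ≥ 0 (smooth also across x = x₁); the function q := −Q₀/ζ is positive; dζ/dx = √q; and if f solves −ℏ² f'' + (V − E) f = 0, then w(ζ) := q^{1/4} f, regarded as a function of ζ, solves the perturbed Airy equation −ℏ² d²w/dζ² = (ζ + ℏ² Ṽ(ζ,E;ℏ)) w, where Ṽ := (1/4) q^{-1} ⟨x⟩^{-2}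 − q^{-1/4} d²(q^{1/4})/dζ². -/
/-!
By Hadamard's lemma `Q = V₀ - E` factors near its simple zero `c` as `(x - c)` times the smooth
negative function `dslope Q c`. Rescaling the integration variable to the segment from `c` to `x`
turns the phase `(3 / 2) ∫ √|Q|` into `(x - c) |x - c| ^ (1 / 2) H` with `H` a smooth positive
parametric integral, so that the powers `3 / 2` and `2 / 3` cancel and `ζ = (x - c) H ^ (2 / 3)` is
smooth across `c`. Integrating by parts gives a linear differential equation for `H`, and this
yields `ζ ζ' ^ 2 = -Q`. The Airy equation is then the Liouville transformation with amplitude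
`q ^ (1 / 4) = √ζ'`. Small energies have a single turning point because `V₀` is bounded below by
`E` on compact sets and strictly decreasing to `0` at infinity.
-/

open Set Filter Topology MeasureTheory
open scoped ContDiff

section Segment

variable {U : Set ℝ} {c x : ℝ}

theorem hasDerivAt_ray_parameter (s : ℝ) : HasDerivAt (fun s => c + s * (x - c)) (x - c) s := by
  simpa using ((hasDerivAt_id s).mul_const (x - c)).const_add c

theorem hasDerivAt_ray_endpoint (s : ℝ) : HasDerivAt (fun x => c + s * (x - c)) s x := by
  simpa using (((hasDerivAt_id x).sub_const c).const_mul s).const_add c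

theorem ray_mem (hU : StarConvex ℝ c U) (hx : x ∈ U) {s : ℝ} (hs : s ∈ Icc (0 : ℝ) 1) :
    c + s * (x - c) ∈ U :=
  hU.add_smul_sub_mem hx hs.1 hs.2

theorem continuousOn_comp_ray {X : Type*} [TopologicalSpace X] {φ : ℝ → X}
    (hU : StarConvex ℝ c U) (hφ : ContinuousOn φ U) (hx : x ∈ U) :
    ContinuousOn (fun s => φ (c + s * (x - c))) (Icc 0 1) :=
  hφ.comp (by fun_prop) fun _ hs => ray_mem hU hx hs

theorem exists_nhds_bound_comp_ray {F : Type*} [SeminormedAddCommGroup F] {φ : ℝ → F}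
    (hUo : IsOpen U) (hU : StarConvex ℝ c U) (hφ : ContinuousOn φ U) (hx : x ∈ U) :
    ∃ N ∈ 𝓝 x, N ⊆ U ∧ ∃ C, ∀ y ∈ N, ∀ s ∈ Icc (0 : ℝ) 1, ‖φ (c + s * (y - c))‖ ≤ C := by
  obtain ⟨ε, hε, hball⟩ := Metric.nhds_basis_closedBall.mem_iff.1 (hUo.mem_nhds hx)
  have hcont : ContinuousOn (fun p : ℝ × ℝ => φ (c + p.1 * (p.2 - c)))
      (Icc 0 1 ×ˢ Metric.closedBall x ε) :=
    hφ.comp (by fun_prop) fun p hp => ray_mem hU (hball hp.2) hp.1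
  obtain ⟨C, hC⟩ :=
    (isCompact_Icc.prod (isCompact_closedBall x ε)).exists_bound_of_continuousOn hcont
  exact ⟨_, Metric.closedBall_mem_nhds x hε, hball, C, fun y hy s hs => hC (s, y) ⟨hs, hy⟩⟩

end Segment

section RayIntegral

variable {F : Type*} [NormedAddCommGroup F] [NormedSpace ℝ F]

/-- The weighted integral of `φ` along the segment from `c` to `x`, parametrised by `[0, 1]`. -/
noncomputable def rayIntegral (w : ℝ → ℝ) (c : ℝ) (φ : ℝ → F) (x : ℝ) : F :=
  ∫ s in (0 : ℝ)..1, w s • φ (c + s * (x - c))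

variable {U : Set ℝ} {c x : ℝ} {w w' : ℝ → ℝ} {φ : ℝ → F}

theorem intervalIntegrable_smul_comp_ray (hU : StarConvex ℝ c U)
    (hw : IntervalIntegrable w volume 0 1) (hφ : ContinuousOn φ U) (hx : x ∈ U) :
    IntervalIntegrable (fun s => w s • φ (c + s * (x - c))) volume 0 1 :=
  hw.smul_continuousOn (by simpa using continuousOn_comp_ray hU hφ hx)

theorem continuousOn_rayIntegral (hUo : IsOpen U) (hU : StarConvex ℝ c U)
    (hw : IntervalIntegrable w volume 0 1) (hφ : ContinuousOn φ U) :
    ContinuousOn (rayIntegral w c φ) U := by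
  intro x hx
  obtain ⟨N, hN, -, C, hC⟩ := exists_nhds_bound_comp_ray hUo hU hφ hx
  refine intervalIntegral.continuousWithinAt_of_dominated_interval
    (bound := fun s => ‖w s‖ * C) ?_ ?_ (hw.norm.mul_const C) ?_
  · filter_upwards [self_mem_nhdsWithin] with y hy
    exact (intervalIntegrable_smul_comp_ray hU hw hφ hy).def'.aestronglyMeasurable
  · filter_upwards [mem_nhdsWithin_of_mem_nhds hN] with y hy
    refine Eventually.of_forall fun s hs => ?_
    rw [uIoc_of_le zero_le_one] at hs
    rw [norm_smul]
    gcongr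
    exact hC y hy s (Ioc_subset_Icc_self hs)
  · refine Eventually.of_forall fun s hs => ?_
    rw [uIoc_of_le zero_le_one] at hs
    exact (hφ.comp (by fun_prop) (fun y hy => ray_mem hU hy (Ioc_subset_Icc_self hs)) x
      hx).const_smul (w s)

theorem hasDerivAt_rayIntegral (hUo : IsOpen U) (hU : StarConvex ℝ c U)
    (hw : IntervalIntegrable w volume 0 1) (hφ : ContDiffOn ℝ 1 φ U) (hx : x ∈ U) :
    HasDerivAt (rayIntegral w c φ) (rayIntegral (fun s => w s * s) c (deriv φ) x) x := by
  have hφ' : ContinuousOn (deriv φ) U := hφ.continuousOn_deriv_of_isOpen hUo le_rfl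
  have hws : IntervalIntegrable (fun s => w s * s) volume 0 1 :=
    hw.mul_continuousOn continuousOn_id
  obtain ⟨N, hN, hNU, C, hC⟩ := exists_nhds_bound_comp_ray hUo hU hφ' hx
  refine (intervalIntegral.hasDerivAt_integral_of_dominated_loc_of_deriv_le
    (F := fun y s => w s • φ (c + s * (y - c)))
    (F' := fun y s => (w s * s) • deriv φ (c + s * (y - c))) (bound := fun s => ‖w s * s‖ * C) hN ?_
    (intervalIntegrable_smul_comp_ray hU hw hφ.continuousOn hx)
    (intervalIntegrable_smul_comp_ray hU hws hφ' hx).def'.aestronglyMeasurable ?_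
    (hws.norm.mul_const C) ?_).2
  · filter_upwards [hUo.mem_nhds hx] with y hy
    exact (intervalIntegrable_smul_comp_ray hU hw hφ.continuousOn hy).def'.aestronglyMeasurable
  · refine Eventually.of_forall fun s hs y hy => ?_
    rw [uIoc_of_le zero_le_one] at hs
    rw [norm_smul]
    gcongr
    exact hC y hy s (Ioc_subset_Icc_self hs)
  · refine Eventually.of_forall fun s hs y hy => ?_
    rw [uIoc_of_le zero_le_one] at hs
    have hmem := ray_mem hU (hNU hy) (Ioc_subset_Icc_self hs)
    have hφs := ((hφ.differentiableOn one_ne_zero).differentiableAt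
      (hUo.mem_nhds hmem)).hasDerivAt
    rw [mul_smul]
    exact (hφs.scomp y (hasDerivAt_ray_endpoint s)).const_smul (w s)

theorem contDiffOn_rayIntegral {n : ℕ∞} (hUo : IsOpen U) (hU : StarConvex ℝ c U)
    (hw : IntervalIntegrable w volume 0 1) (hφ : ContDiffOn ℝ n φ U) :
    ContDiffOn ℝ n (rayIntegral w c φ) U := by
  refine contDiffOn_iff_forall_nat_le.2 fun m hm => ?_
  replace hφ : ContDiffOn ℝ m φ U := hφ.of_le (by exact_mod_cast hm)
  clear hm
  induction m generalizing w φ with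
  | zero => exact contDiffOn_zero.2 (continuousOn_rayIntegral hUo hU hw hφ.continuousOn)
  | succ m ih =>
    have hderiv : ∀ x ∈ U, HasDerivAt (rayIntegral w c φ) _ x := fun x hx =>
      hasDerivAt_rayIntegral hUo hU hw (hφ.of_le (by simp)) hx
    push_cast at hφ ⊢
    rw [contDiffOn_succ_iff_deriv_of_isOpen hUo] at hφ ⊢
    exact ⟨fun x hx => (hderiv x hx).differentiableAt.differentiableWithinAt, by simp,
      (ih (hw.mul_continuousOn continuousOn_id) hφ.2.2).congr fun x hx => (hderiv x hx).deriv⟩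

theorem rayIntegral_by_parts [CompleteSpace F] (hUo : IsOpen U) (hU : StarConvex ℝ c U)
    (hw : ContinuousOn w (Icc 0 1)) (hww' : ∀ s ∈ Ioo (0 : ℝ) 1, HasDerivAt w (w' s) s)
    (hw' : IntervalIntegrable w' volume 0 1) (hφ : ContDiffOn ℝ 1 φ U) (hx : x ∈ U) :
    rayIntegral w' c φ x + (x - c) • rayIntegral w c (deriv φ) x = w 1 • φ x - w 0 • φ c := by
  have hφ' : ContinuousOn (deriv φ) U := hφ.continuousOn_deriv_of_isOpen hUo le_rfl
  have hint := intervalIntegrable_smul_comp_ray hU hw' hφ.continuousOn hx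
  have hint' :
      IntervalIntegrable (fun s => (x - c) • w s • deriv φ (c + s * (x - c))) volume 0 1 :=
    (intervalIntegrable_smul_comp_ray hU (hw.intervalIntegrable_of_Icc zero_le_one) hφ' hx).smul
      (x - c)
  have hprod : ∀ s ∈ Ioo (0 : ℝ) 1, HasDerivAt (fun s => w s • φ (c + s * (x - c)))
      (w' s • φ (c + s * (x - c)) + (x - c) • w s • deriv φ (c + s * (x - c))) s := by
    intro s hs
    have hmem := ray_mem hU hx (Ioo_subset_Icc_self hs)
    have hφs := ((hφ.differentiableOn one_ne_zero).differentiableAt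
      (hUo.mem_nhds hmem)).hasDerivAt
    refine ((hww' s hs).smul (hφs.scomp s (hasDerivAt_ray_parameter s))).congr_deriv ?_
    rw [smul_comm (w s), add_comm]
    rfl
  have key := intervalIntegral.integral_eq_sub_of_hasDerivAt_of_le zero_le_one
    (hw.smul (continuousOn_comp_ray hU hφ.continuousOn hx)) hprod (hint.add hint')
  rw [intervalIntegral.integral_add hint hint', intervalIntegral.integral_smul] at key
  simpa [rayIntegral] using key

theorem rayIntegral_pos {φ : ℝ → ℝ} (hU : StarConvex ℝ c U) (hw : IntervalIntegrable w volume 0 1)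
    (hwpos : ∀ s ∈ Ioo (0 : ℝ) 1, 0 < w s) (hφ : ContinuousOn φ U) (hφpos : ∀ y ∈ U, 0 < φ y)
    (hx : x ∈ U) : 0 < rayIntegral w c φ x :=
  intervalIntegral.intervalIntegral_pos_of_pos_on (intervalIntegrable_smul_comp_ray hU hw hφ hx)
    (fun s hs => mul_pos (hwpos s hs) (hφpos _ (ray_mem hU hx (Ioo_subset_Icc_self hs))))
    zero_lt_one

/-- Hadamard's lemma: smooth division by `x - c`. -/
theorem eqOn_dslope_rayIntegral [CompleteSpace F] (hUo : IsOpen U) (hU : StarConvex ℝ c U)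
    (hφ : ContDiffOn ℝ 1 φ U) :
    EqOn (dslope φ c) (rayIntegral (fun _ => 1) c (deriv φ)) U := by
  intro x hx
  rcases eq_or_ne x c with rfl | hne
  · simp [rayIntegral]
  · have hparts := rayIntegral_by_parts (w' := fun _ => 0) hUo hU continuousOn_const
      (fun s _ => hasDerivAt_const s (1 : ℝ)) intervalIntegrable_const hφ hx
    refine smul_right_injective F (sub_ne_zero.2 hne) ?_
    simpa [rayIntegral] using hparts.symm

theorem contDiffOn_dslope [CompleteSpace F] {n : ℕ∞} (hUo : IsOpen U) (hU : StarConvex ℝ c U)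
    (hφ : ContDiffOn ℝ (n + 1) φ U) : ContDiffOn ℝ n (dslope φ c) U :=
  (contDiffOn_rayIntegral hUo hU intervalIntegrable_const
    ((contDiffOn_succ_iff_deriv_of_isOpen hUo).1 hφ).2.2).congr
    (eqOn_dslope_rayIntegral hUo hU (hφ.of_le le_add_self))

end RayIntegral

/-- `c` is a simple turning point of `Q`, and the only one in the open interval `U`: there `Q` is
positive to the left and negative to the right of `c`, with `Q' c < 0`. As `dslope Q c c = Q' c`,
one inequality on `dslope` covers all three conditions. -/
structure IsTurningPoint (Q : ℝ → ℝ) (c : ℝ) (U : Set ℝ) : Prop where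
  isOpen : IsOpen U
  convex : Convex ℝ U
  mem : c ∈ U
  zero : Q c = 0
  dslope_neg : ∀ x ∈ U, dslope Q c x < 0

/-- The Liouville–Green (Langer) variable `ζ` of `Q` based at `c`. -/
noncomputable def langerVariable (Q : ℝ → ℝ) (c x : ℝ) : ℝ :=
  Real.sign (x - c) * (abs ((3 : ℝ) / 2 * ∫ u in c..x, √|Q u|)) ^ ((2 : ℝ) / 3)

/-- The coefficient `q = (dζ/dx) ^ 2` of the Langer variable. Away from `c` it is the quotient
`-Q / ζ`, which has the junk value `0` at `c`. -/
noncomputable def langerCoeff (Q : ℝ → ℝ) (c x : ℝ) : ℝ :=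
  deriv (langerVariable Q c) x ^ 2

/-- The regular factor `H` of the phase at a turning point:
`(3 / 2) ∫ √|Q| = (x - c) |x - c| ^ (1 / 2) H`, so that `ζ = (x - c) H ^ (2 / 3)`. -/
noncomputable def phaseFactor (Q : ℝ → ℝ) (c : ℝ) : ℝ → ℝ :=
  rayIntegral (fun s => 3 / 2 * √s) c fun u => √(-dslope Q c u)

theorem hasDerivAt_mul_sqrt {s : ℝ} (hs : 0 < s) :
    HasDerivAt (fun s => s * √s) (3 / 2 * √s) s := by
  refine ((hasDerivAt_id s).mul (Real.hasDerivAt_sqrt hs.ne')).congr_deriv ?_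
  have hsq : √s ^ 2 = s := Real.sq_sqrt hs.le
  simp only [id]
  field_simp
  linear_combination -hsq

theorem mul_sqrt_rpow_two_thirds {t : ℝ} (ht : 0 ≤ t) : (t * √t) ^ ((2 : ℝ) / 3) = t := by
  have hpow : t * √t = t ^ ((3 : ℝ) / 2) := by
    rw [Real.sqrt_eq_rpow, ← Real.rpow_one_add' ht (by norm_num)]
    norm_num
  rw [hpow, ← Real.rpow_mul ht]
  norm_num

theorem sign_mul_abs_self (t : ℝ) : Real.sign t * |t| = t := by
  rcases lt_trichotomy t 0 with ht | rfl | ht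
  · simp [Real.sign_of_neg ht, abs_of_neg ht]
  · simp
  · simp [Real.sign_of_pos ht, abs_of_pos ht]

namespace IsTurningPoint

variable {Q : ℝ → ℝ} {c x : ℝ} {U : Set ℝ}

theorem starConvex (hT : IsTurningPoint Q c U) : StarConvex ℝ c U :=
  hT.convex.starConvex hT.mem

theorem sub_mul_dslope (hT : IsTurningPoint Q c U) (x : ℝ) : (x - c) * dslope Q c x = Q x :=
  sub_smul_dslope_of_zero hT.zero x

theorem eq_of_eq_zero (hT : IsTurningPoint Q c U) (hx : x ∈ U) (hQx : Q x = 0) : x = c := by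
  rw [← hT.sub_mul_dslope x, mul_eq_zero, sub_eq_zero] at hQx
  exact hQx.resolve_right (hT.dslope_neg x hx).ne

theorem deriv_neg (hT : IsTurningPoint Q c U) : deriv Q c < 0 :=
  dslope_same Q c ▸ hT.dslope_neg c hT.mem

theorem sqrt_neg_dslope_pos (hT : IsTurningPoint Q c U) (hx : x ∈ U) : 0 < √(-dslope Q c x) :=
  Real.sqrt_pos.2 (neg_pos.2 (hT.dslope_neg x hx))

theorem contDiffOn_sqrt_neg_dslope {n : ℕ∞} (hT : IsTurningPoint Q c U)
    (hQ : ContDiffOn ℝ (n + 1) Q U) : ContDiffOn ℝ n (fun x => √(-dslope Q c x)) U :=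
  (contDiffOn_dslope hT.isOpen hT.starConvex hQ).neg.sqrt
    fun x hx => (neg_pos.2 (hT.dslope_neg x hx)).ne'

theorem phaseFactor_pos (hT : IsTurningPoint Q c U) (hQ : ContDiffOn ℝ 1 Q U) (hx : x ∈ U) :
    0 < phaseFactor Q c x :=
  rayIntegral_pos hT.starConvex (Continuous.intervalIntegrable (by fun_prop) _ _)
    (fun s hs => mul_pos (by norm_num) (Real.sqrt_pos.2 hs.1))
    (hT.contDiffOn_sqrt_neg_dslope (n := 0) (by simpa using hQ)).continuousOn
    (fun _ hy => hT.sqrt_neg_dslope_pos hy) hx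

theorem contDiffOn_phaseFactor {n : ℕ∞} (hT : IsTurningPoint Q c U)
    (hQ : ContDiffOn ℝ (n + 1) Q U) : ContDiffOn ℝ n (phaseFactor Q c) U :=
  contDiffOn_rayIntegral hT.isOpen hT.starConvex
    (Continuous.intervalIntegrable (by fun_prop) _ _) (hT.contDiffOn_sqrt_neg_dslope hQ)

/-- This linear differential equation is what eliminates `H'` from `ζ'`. -/
theorem exists_hasDerivAt_phaseFactor (hT : IsTurningPoint Q c U) (hQ : ContDiffOn ℝ 2 Q U)
    (hx : x ∈ U) :
    ∃ H', HasDerivAt (phaseFactor Q c) H' x ∧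
      phaseFactor Q c x + 2 / 3 * (x - c) * H' = √(-dslope Q c x) := by
  have hp := hT.contDiffOn_sqrt_neg_dslope (n := 1) (by simpa [one_add_one_eq_two] using hQ)
  have hw : Continuous fun s : ℝ => 3 / 2 * √s := by fun_prop
  refine ⟨_, hasDerivAt_rayIntegral hT.isOpen hT.starConvex (hw.intervalIntegrable _ _) hp hx, ?_⟩
  have hparts := rayIntegral_by_parts (w := fun s => s * √s) hT.isOpen hT.starConvex
    (by fun_prop) (fun s hs => hasDerivAt_mul_sqrt hs.1) (hw.intervalIntegrable _ _) hp hx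
  have hweight : rayIntegral (fun s => 3 / 2 * √s * s) c (deriv fun u => √(-dslope Q c u)) x =
      3 / 2 * rayIntegral (fun s => s * √s) c (deriv fun u => √(-dslope Q c u)) x := by
    simp only [rayIntegral, smul_eq_mul, ← intervalIntegral.integral_const_mul]
    congr! 2
    ring
  rw [hweight]
  simp only [smul_eq_mul, Real.sqrt_one, mul_one, one_mul, zero_mul, sub_zero] at hparts
  rw [← hparts, phaseFactor]
  ring

theorem integral_sqrt_abs_eq (hT : IsTurningPoint Q c U) (hx : x ∈ U) :
    3 / 2 * ∫ u in c..x, √|Q u| = (x - c) * √|x - c| * phaseFactor Q c x := by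
  have hray : EqOn (fun s => 3 / 2 * √|Q (c + (x - c) * s)|)
      (fun s => √|x - c| * ((3 / 2 * √s) • √(-dslope Q c (c + s * (x - c))))) (uIcc 0 1) := by
    intro s hs
    rw [uIcc_of_le zero_le_one] at hs
    have hneg := hT.dslope_neg _ (ray_mem hT.starConvex hx hs)
    dsimp only
    rw [mul_comm (x - c) s, ← hT.sub_mul_dslope, add_sub_cancel_left, abs_mul, abs_mul,
      abs_of_nonneg hs.1, abs_of_neg hneg, Real.sqrt_mul (mul_nonneg hs.1 (abs_nonneg _)),
      Real.sqrt_mul hs.1, smul_eq_mul]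
    ring
  have hsubst := intervalIntegral.smul_integral_comp_add_mul (a := 0) (b := 1)
    (fun u => √|Q u|) (x - c) c
  simp only [smul_eq_mul, mul_zero, add_zero, mul_one, add_sub_cancel] at hsubst
  rw [← hsubst, mul_left_comm, ← intervalIntegral.integral_const_mul,
    intervalIntegral.integral_congr hray,
    intervalIntegral.integral_const_mul, phaseFactor, rayIntegral, mul_assoc]

theorem langerVariable_eq (hT : IsTurningPoint Q c U) (hQ : ContDiffOn ℝ 1 Q U) (hx : x ∈ U) :
    langerVariable Q c x = (x - c) * phaseFactor Q c x ^ ((2 : ℝ) / 3) := by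
  have hH := hT.phaseFactor_pos hQ hx
  rw [langerVariable, hT.integral_sqrt_abs_eq hx, abs_mul, abs_mul, abs_of_pos hH,
    abs_of_nonneg (Real.sqrt_nonneg _), Real.mul_rpow (by positivity) hH.le,
    mul_sqrt_rpow_two_thirds (abs_nonneg _), ← mul_assoc, sign_mul_abs_self]

theorem contDiffOn_langerVariable {n : ℕ∞} (hT : IsTurningPoint Q c U)
    (hQ : ContDiffOn ℝ (n + 1) Q U) : ContDiffOn ℝ n (langerVariable Q c) U := by
  have hQ1 : ContDiffOn ℝ 1 Q U := hQ.of_le le_add_self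
  exact ((contDiff_id.sub contDiff_const).contDiffOn.mul ((hT.contDiffOn_phaseFactor hQ
    ).rpow_const_of_ne fun x hx => (hT.phaseFactor_pos hQ1 hx).ne')).congr
      fun x hx => hT.langerVariable_eq hQ1 hx

theorem deriv_langerVariable (hT : IsTurningPoint Q c U) (hQ : ContDiffOn ℝ 2 Q U) (hx : x ∈ U) :
    deriv (langerVariable Q c) x = √(-dslope Q c x) * phaseFactor Q c x ^ (-(1 : ℝ) / 3) := by
  have hQ1 : ContDiffOn ℝ 1 Q U := hQ.of_le one_le_two
  obtain ⟨H', hH', hode⟩ := hT.exists_hasDerivAt_phaseFactor hQ hx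
  have hH := hT.phaseFactor_pos hQ1 hx
  have heq : langerVariable Q c =ᶠ[𝓝 x] fun y => (y - c) * phaseFactor Q c y ^ ((2 : ℝ) / 3) := by
    filter_upwards [hT.isOpen.mem_nhds hx] with y hy using hT.langerVariable_eq hQ1 hy
  have hderiv := ((hasDerivAt_id x).sub_const c).mul
    (hH'.rpow_const (p := (2 : ℝ) / 3) (Or.inl hH.ne'))
  rw [heq.deriv_eq]
  refine hderiv.deriv.trans ?_
  have hpow : phaseFactor Q c x ^ ((2 : ℝ) / 3) =
      phaseFactor Q c x * phaseFactor Q c x ^ (-(1 : ℝ) / 3) := by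
    rw [← Real.rpow_one_add' hH.le (by norm_num)]
    norm_num
  rw [hpow, ← hode, show (2 : ℝ) / 3 - 1 = -1 / 3 by norm_num]
  simp only [id]
  ring

theorem deriv_langerVariable_pos (hT : IsTurningPoint Q c U) (hQ : ContDiffOn ℝ 2 Q U)
    (hx : x ∈ U) : 0 < deriv (langerVariable Q c) x := by
  rw [hT.deriv_langerVariable hQ hx]
  exact mul_pos (hT.sqrt_neg_dslope_pos hx)
    (Real.rpow_pos_of_pos (hT.phaseFactor_pos (hQ.of_le one_le_two) hx) _)

theorem langerCoeff_mul_langerVariable (hT : IsTurningPoint Q c U) (hQ : ContDiffOn ℝ 2 Q U)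
    (hx : x ∈ U) : langerCoeff Q c x * langerVariable Q c x = -Q x := by
  have hQ1 : ContDiffOn ℝ 1 Q U := hQ.of_le one_le_two
  have hH := hT.phaseFactor_pos hQ1 hx
  have hcancel :
      (phaseFactor Q c x ^ (-(1 : ℝ) / 3)) ^ 2 * phaseFactor Q c x ^ ((2 : ℝ) / 3) = 1 := by
    rw [← Real.rpow_mul_natCast hH.le, ← Real.rpow_add hH]
    norm_num
  have hsq : √(-dslope Q c x) ^ 2 = -dslope Q c x :=
    Real.sq_sqrt (neg_pos.2 (hT.dslope_neg x hx)).le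
  rw [langerCoeff, hT.deriv_langerVariable hQ hx, hT.langerVariable_eq hQ1 hx,
    ← hT.sub_mul_dslope x]
  linear_combination (x - c) * √(-dslope Q c x) ^ 2 * hcancel + (x - c) * hsq

theorem langerCoeff_pos (hT : IsTurningPoint Q c U) (hQ : ContDiffOn ℝ 2 Q U) (hx : x ∈ U) :
    0 < langerCoeff Q c x :=
  pow_pos (hT.deriv_langerVariable_pos hQ hx) 2

theorem langerCoeff_eq_div (hT : IsTurningPoint Q c U) (hQ : ContDiffOn ℝ 2 Q U) (hx : x ∈ U)
    (hxc : x ≠ c) : langerCoeff Q c x = -Q x / langerVariable Q c x := by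
  have hmul := hT.langerCoeff_mul_langerVariable hQ hx
  refine eq_div_of_mul_eq (fun hζ => hxc (hT.eq_of_eq_zero hx ?_)) hmul
  rwa [hζ, mul_zero, zero_eq_neg] at hmul

theorem contDiffOn_langerCoeff {n : ℕ∞} (hT : IsTurningPoint Q c U)
    (hQ : ContDiffOn ℝ (n + 2) Q U) : ContDiffOn ℝ n (langerCoeff Q c) U := by
  have hζ : ContDiffOn ℝ (n + 1) (langerVariable Q c) U :=
    hT.contDiffOn_langerVariable (n := n + 1) (by simpa [add_assoc, one_add_one_eq_two] using hQ)
  exact ((contDiffOn_succ_iff_deriv_of_isOpen hT.isOpen).1 hζ).2.2.pow 2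

theorem hasStrictDerivAt_langerVariable (hT : IsTurningPoint Q c U) (hQ : ContDiffOn ℝ 2 Q U)
    (hx : x ∈ U) : HasStrictDerivAt (langerVariable Q c) (√(langerCoeff Q c x)) x := by
  rw [langerCoeff, Real.sqrt_sq (hT.deriv_langerVariable_pos hQ hx).le]
  exact ((hT.contDiffOn_langerVariable (n := 1) (by simpa [one_add_one_eq_two] using hQ)).contDiffAt
    (hT.isOpen.mem_nhds hx)).hasStrictDerivAt one_ne_zero

theorem strictMonoOn_langerVariable (hT : IsTurningPoint Q c U) (hQ : ContDiffOn ℝ 2 Q U) :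
    StrictMonoOn (langerVariable Q c) U :=
  strictMonoOn_of_deriv_pos hT.convex
    (HasDerivAt.continuousOn fun _ hx => (hT.hasStrictDerivAt_langerVariable hQ hx).hasDerivAt)
    fun _ hx => hT.deriv_langerVariable_pos hQ (interior_subset hx)

end IsTurningPoint

section LiouvilleTransformation

variable {S : Set ℝ} {ζ xinv a q f f' f'' : ℝ → ℝ} {x : ℝ}

theorem hasDerivAt_comp_leftInverse {φ : ℝ → ℝ} {ζ' φ' : ℝ} (hS : S ∈ 𝓝 x)
    (hζ : HasStrictDerivAt ζ ζ' x) (hζ' : ζ' ≠ 0) (hinv : LeftInvOn xinv ζ S)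
    (hφ : HasDerivAt φ φ' x) : HasDerivAt (fun z => φ (xinv z)) (φ' / ζ') (ζ x) := by
  have hxinv : HasDerivAt xinv ζ'⁻¹ (ζ x) :=
    (hζ.to_local_left_inverse hζ' (by filter_upwards [hS] with y hy using hinv hy)).hasDerivAt
  exact HasDerivAt.comp (h₂ := φ) (ζ x) (by rwa [hinv (mem_of_mem_nhds hS)]) hxinv

theorem deriv_deriv_comp_leftInverse {ζ' φ φ' : ℝ → ℝ} {D : ℝ} (hS : IsOpen S)
    (hζ : ∀ y ∈ S, HasStrictDerivAt ζ (ζ' y) y) (hζ' : ∀ y ∈ S, ζ' y ≠ 0)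
    (hinv : LeftInvOn xinv ζ S) (hφ : ∀ y ∈ S, HasDerivAt φ (φ' y) y)
    (hD : HasDerivAt (fun y => φ' y / ζ' y) D x) (hx : x ∈ S) :
    deriv (deriv (fun z => φ (xinv z))) (ζ x) = D / ζ' x := by
  have hev : deriv (fun z => φ (xinv z)) =ᶠ[𝓝 (ζ x)] fun z => φ' (xinv z) / ζ' (xinv z) := by
    rw [← (hζ x hx).map_nhds_eq (hζ' x hx), EventuallyEq, eventually_map]
    filter_upwards [hS.mem_nhds hx] with y hy
    rw [hinv hy]
    exact (hasDerivAt_comp_leftInverse (hS.mem_nhds hy) (hζ y hy) (hζ' y hy) hinv (hφ y hy)).deriv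
  rw [hev.deriv_eq]
  exact (hasDerivAt_comp_leftInverse (hS.mem_nhds hx) (hζ x hx) (hζ' x hx) hinv hD).deriv

/-- The Liouville transformation: the amplitude `a` with `dζ/dx = a ^ 2` is the one for which the
terms containing `df/dx` cancel. -/
theorem deriv_deriv_liouville (hS : IsOpen S) (ha : ∀ y ∈ S, 0 < a y) (has : ContDiffOn ℝ 2 a S)
    (hζ : ∀ y ∈ S, HasStrictDerivAt ζ (a y ^ 2) y) (hinv : LeftInvOn xinv ζ S)
    (hf : ∀ y ∈ S, HasDerivAt f (f' y) y) (hf' : HasDerivAt f' (f'' x) x) (hx : x ∈ S) :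
    deriv (deriv (fun z => a (xinv z) * f (xinv z))) (ζ x) =
      deriv (deriv (fun z => a (xinv z))) (ζ x) * f x + f'' x / a x ^ 3 := by
  have hζ' : ∀ y ∈ S, a y ^ 2 ≠ 0 := fun y hy => (pow_pos (ha y hy) 2).ne'
  have ha1 : ∀ y ∈ S, HasDerivAt a (deriv a y) y := fun y hy =>
    ((has.differentiableOn two_ne_zero).differentiableAt (hS.mem_nhds hy)).hasDerivAt
  have ha2 : DifferentiableAt ℝ (deriv a) x :=
    (((contDiffOn_succ_iff_deriv_of_isOpen (n := 1) hS).1 has).2.2.differentiableOn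
      one_ne_zero).differentiableAt (hS.mem_nhds hx)
  have hax := ha x hx
  obtain ⟨b, hb⟩ : ∃ b, HasDerivAt (fun y => deriv a y / a y ^ 2) b x :=
    ⟨_, (ha2.div ((ha1 x hx).differentiableAt.pow 2) (hζ' x hx)).hasDerivAt⟩
  have hcancel : HasDerivAt (fun y => (deriv a y * f y + a y * f' y) / a y ^ 2)
      (b * f x + (a x)⁻¹ * f'' x) x := by
    have hsum : HasDerivAt (fun y => deriv a y / a y ^ 2 * f y + (a y)⁻¹ * f' y)
        (b * f x + (a x)⁻¹ * f'' x) x := by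
      refine ((hb.mul (hf x hx)).add (((ha1 x hx).inv hax.ne').mul hf')).congr_deriv ?_
      simp only [Pi.inv_apply]
      ring
    refine hsum.congr_of_eventuallyEq ?_
    filter_upwards [hS.mem_nhds hx] with y hy
    have hay := ha y hy
    field_simp
  rw [deriv_deriv_comp_leftInverse hS hζ hζ' hinv ha1 hb hx,
    deriv_deriv_comp_leftInverse (φ := fun y => a y * f y) hS hζ hζ' hinv
      (fun y hy => (ha1 y hy).mul (hf y hy)) hcancel hx]
  field_simp

theorem deriv_deriv_liouville_rpow (hS : IsOpen S) (hq : ∀ y ∈ S, 0 < q y)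
    (hqs : ContDiffOn ℝ 2 q S) (hζ : ∀ y ∈ S, HasStrictDerivAt ζ (√(q y)) y)
    (hinv : LeftInvOn xinv ζ S) (hf : ∀ y ∈ S, HasDerivAt f (f' y) y)
    (hf' : HasDerivAt f' (f'' x) x) (hx : x ∈ S) :
    deriv (deriv (fun z => q (xinv z) ^ ((1 : ℝ) / 4) * f (xinv z))) (ζ x) =
      q x ^ ((1 : ℝ) / 4) * (q x ^ (-(1 : ℝ) / 4) *
        deriv (deriv (fun z => q (xinv z) ^ ((1 : ℝ) / 4))) (ζ x) * f x + f'' x / q x) := by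
  have hsq : ∀ y ∈ S, (q y ^ ((1 : ℝ) / 4)) ^ 2 = √(q y) := fun y hy => by
    rw [← Real.rpow_mul_natCast (hq y hy).le, Real.sqrt_eq_rpow]
    norm_num
  have hqx := hq x hx
  have hpos := Real.rpow_pos_of_pos hqx ((1 : ℝ) / 4)
  have hfourth : q x = (q x ^ ((1 : ℝ) / 4)) ^ 4 := by
    rw [← Real.rpow_mul_natCast hqx.le]
    norm_num
  have hneg : q x ^ (-(1 : ℝ) / 4) = (q x ^ ((1 : ℝ) / 4))⁻¹ := by
    rw [← Real.rpow_neg hqx.le, neg_div]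
  have hdiv : f'' x / (q x ^ ((1 : ℝ) / 4)) ^ 3 = q x ^ ((1 : ℝ) / 4) * (f'' x / q x) := by
    rw [mul_div_assoc', div_eq_div_iff (pow_pos hpos 3).ne' hqx.ne']
    linear_combination f'' x * hfourth
  rw [deriv_deriv_liouville (a := fun y => q y ^ ((1 : ℝ) / 4)) hS
    (fun y hy => Real.rpow_pos_of_pos (hq y hy) _)
    (hqs.rpow_const_of_ne fun y hy => (hq y hy).ne')
    (fun y hy => (hsq y hy).symm ▸ hζ y hy) hinv hf hf' hx, hneg, hdiv]
  field_simp

/-- The potential `Ṽ` of the perturbed Airy equation, as a function of `ζ`; `xinv` inverts `ζ`. -/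
noncomputable def airyPotential (q xinv : ℝ → ℝ) (z : ℝ) : ℝ :=
  1 / 4 * (q (xinv z))⁻¹ * (1 + xinv z ^ 2)⁻¹
    - q (xinv z) ^ (-(1 : ℝ) / 4) * deriv (deriv (fun z => q (xinv z) ^ ((1 : ℝ) / 4))) z

theorem perturbed_airy {V : ℝ → ℝ} {h E : ℝ} (hS : IsOpen S) (hq : ∀ y ∈ S, 0 < q y)
    (hqs : ContDiffOn ℝ 2 q S) (hζ : ∀ y ∈ S, HasStrictDerivAt ζ (√(q y)) y)
    (hinv : LeftInvOn xinv ζ S) (hf : ∀ y ∈ S, HasDerivAt f (f' y) y)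
    (hf' : HasDerivAt f' (f'' x) x) (hx : x ∈ S) (hqζ : q x * ζ x = -(V0 V h x - E))
    (hode : -h ^ 2 * f'' x + (V x - E) * f x = 0) :
    -h ^ 2 * deriv (deriv (fun z => q (xinv z) ^ ((1 : ℝ) / 4) * f (xinv z))) (ζ x) =
      (ζ x + h ^ 2 * airyPotential q xinv (ζ x)) * (q x ^ ((1 : ℝ) / 4) * f x) := by
  have hne := (hq x hx).ne'
  have hright : -h ^ 2 * (f'' x / q x) =
      (ζ x + h ^ 2 * (1 / 4 * (q x)⁻¹ * (1 + x ^ 2)⁻¹)) * f x := by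
    rw [V0] at hqζ
    generalize (1 + x ^ 2)⁻¹ = J at hqζ ⊢
    field_simp
    linear_combination 4 * hode - 4 * f x * hqζ
  rw [deriv_deriv_liouville_rpow hS hq hqs hζ hinv hf hf' hx, airyPotential, hinv hx]
  linear_combination q x ^ ((1 : ℝ) / 4) * hright

end LiouvilleTransformation

section ExistsTurningPoint

variable {V : ℝ → ℝ}

theorem dslope_neg_of_sign_change {Q : ℝ → ℝ} {c x : ℝ} (hc : Q c = 0) (hd : deriv Q c < 0)
    (hleft : x < c → 0 < Q x) (hright : c < x → Q x < 0) : dslope Q c x < 0 := by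
  rcases lt_trichotomy x c with hx | rfl | hx
  · rw [dslope_of_ne _ hx.ne, slope_def_field, hc, sub_zero]
    exact div_neg_of_pos_of_neg (hleft hx) (sub_neg.2 hx)
  · rwa [dslope_same]
  · rw [dslope_of_ne _ hx.ne', slope_def_field, hc, sub_zero]
    exact div_neg_of_neg_of_pos (hright hx) (sub_pos.2 hx)

theorem exists_isTurningPoint_of_deriv_neg {W : ℝ → ℝ} {a R E : ℝ} (haR : a < R)
    (hlow : ∀ x ∈ Ioc a R, E < W x) (hd : ∀ x, R ≤ x → deriv W x < 0)
    (hE : ∃ᶠ x in atTop, W x < E) :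
    ∃ c, R < c ∧ IsTurningPoint (fun x => W x - E) c (Ioi a) := by
  have hW : ContinuousOn W (Ici R) := fun x hx =>
    (differentiableAt_of_deriv_ne_zero (hd x hx).ne).continuousAt.continuousWithinAt
  have hanti : StrictAntiOn W (Ici R) :=
    strictAntiOn_of_deriv_neg (convex_Ici R) hW fun x hx => hd x (interior_subset hx)
  have hER : E < W R := hlow R ⟨haR, le_rfl⟩
  obtain ⟨y, hRy, hy⟩ := frequently_atTop.1 hE R
  obtain ⟨c, ⟨hRc, -⟩, rfl⟩ :=
    intermediate_value_Icc' hRy (hW.mono Icc_subset_Ici_self) ⟨hy.le, hER.le⟩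
  refine ⟨c, hRc.lt_of_ne fun heq => hER.ne (heq ▸ rfl), isOpen_Ioi, convex_Ioi a, haR.trans_le hRc,
    sub_self _, fun x hx => dslope_neg_of_sign_change (sub_self _) ?_ (fun hxc => ?_) fun hcx => ?_⟩
  · rw [deriv_sub_const]
    exact hd c hRc
  · rcases le_total x R with hxR | hRx
    · exact sub_pos.2 (hlow x ⟨hx, hxR⟩)
    · exact sub_pos.2 (hanti hRx hRc hxc)
  · exact sub_neg.2 (hanti hRc (hRc.trans hcx.le) hcx)

theorem hasDerivAt_V0 {x : ℝ} (hV : DifferentiableAt ℝ V x) (h : ℝ) :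
    HasDerivAt (V0 V h) (deriv V x - h ^ 2 / 2 * x / (1 + x ^ 2) ^ 2) x := by
  have hx : 1 + x ^ 2 ≠ 0 := by positivity
  refine (hV.hasDerivAt.add
    ((((hasDerivAt_pow 2 x).const_add 1).inv hx).const_mul (h ^ 2 / 4))).congr_deriv ?_
  field_simp
  ring

theorem contDiff_V0 {n : ℕ∞ω} (hV : ContDiff ℝ n V) (h : ℝ) : ContDiff ℝ n (V0 V h) :=
  hV.add (contDiff_const.mul ((contDiff_const.add (contDiff_id.pow 2)).inv
    fun x => by simp only [id]; positivity))

theorem tendsto_V0 {l : ℝ} (hV : Tendsto V atTop (𝓝 l)) (h : ℝ) :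
    Tendsto (V0 V h) atTop (𝓝 l) := by
  have hbracket : Tendsto (fun x : ℝ => (1 + x ^ 2)⁻¹) atTop (𝓝 0) :=
    (tendsto_atTop_add_const_left _ 1 (tendsto_pow_atTop two_ne_zero)).inv_tendsto_atTop
  have hsum := hV.add (hbracket.const_mul (h ^ 2 / 4))
  rwa [mul_zero, add_zero] at hsum

theorem le_V0 (V : ℝ → ℝ) (h x : ℝ) : V x ≤ V0 V h x :=
  le_add_of_nonneg_right (by positivity)

theorem deriv_V0_le {x : ℝ} (hV : DifferentiableAt ℝ V x) (h : ℝ) (hx : 0 ≤ x) :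
    deriv (V0 V h) x ≤ deriv V x := by
  rw [(hasDerivAt_V0 hV h).deriv]
  exact sub_le_self _ (by positivity)

theorem exists_forall_isTurningPoint_V0 (hV : ContDiff ℝ 1 V) (hVpos : ∀ x, 0 ≤ x → 0 < V x)
    (hlim : Tendsto V atTop (𝓝 0)) (hderiv : ∀ᶠ x in atTop, deriv V x < 0) :
    ∃ a < 0, ∃ E₀ > 0, ∀ h, ∀ E ∈ Ioo 0 E₀,
      ∃ c > 0, IsTurningPoint (fun x => V0 V h x - E) c (Ioi a) := by
  obtain ⟨R, hR, hneg⟩ :=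
    ((eventually_gt_atTop (0 : ℝ)).and (eventually_forall_ge_atTop.2 hderiv)).exists
  obtain ⟨b, hb, hbV⟩ := exists_Ioc_subset_of_mem_nhds
    (hV.continuous.continuousAt.eventually (lt_mem_nhds (hVpos 0 le_rfl))) (exists_lt 0)
  obtain ⟨a, hba, ha⟩ := exists_between hb
  obtain ⟨m, hm, hmin⟩ := isCompact_Icc.exists_isMinOn
    (nonempty_Icc.2 (ha.trans hR).le) hV.continuous.continuousOn
  have hmpos : 0 < V m := (le_total m 0).elim (fun hm0 => hbV ⟨hba.trans_le hm.1, hm0⟩) (hVpos m)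
  refine ⟨a, ha, V m, hmpos, fun h E hE => ?_⟩
  obtain ⟨c, hRc, hT⟩ := exists_isTurningPoint_of_deriv_neg (W := V0 V h) (E := E)
    (ha.trans hR)
    (fun x hx => (hE.2.trans_le (hmin (Ioc_subset_Icc_self hx))).trans_le (le_V0 V h x))
    (fun x hx => (deriv_V0_le (hV.differentiable one_ne_zero x) h (hR.le.trans hx)).trans_lt
      (hneg x hx))
    ((tendsto_V0 hlim h).eventually_lt_const hE.1).frequently
  exact ⟨c, hR.trans hRc, hT⟩

end ExistsTurningPoint

section InverseSquareDecay

variable {V : ℝ → ℝ} {m C : ℝ}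

theorem tendsto_zero_of_abs_sub_div_sq_le {r : ℝ} (hr : r < 0)
    (hdecay : ∀ x, 1 ≤ x → |V x - m / x ^ 2| ≤ C * x ^ r) : Tendsto V atTop (𝓝 0) := by
  have hsq : Tendsto (fun x : ℝ => m / x ^ 2) atTop (𝓝 0) :=
    tendsto_const_nhds.div_atTop (tendsto_pow_atTop two_ne_zero)
  have hrpow : Tendsto (fun x : ℝ => C * x ^ r) atTop (𝓝 0) := by
    simpa using (tendsto_rpow_neg_atTop (neg_pos.2 hr)).const_mul C
  have herr : Tendsto (fun x => V x - m / x ^ 2) atTop (𝓝 0) := by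
    refine squeeze_zero_norm' ?_ hrpow
    filter_upwards [eventually_ge_atTop 1] with x hx using hdecay x hx
  simpa using herr.add hsq

theorem eventually_deriv_neg_of_abs_deriv_sub_div_sq_le {r : ℝ} (hr : r < -3) (hm : 0 < m)
    (hV : ∀ x, 1 ≤ x → DifferentiableAt ℝ V x)
    (hdecay : ∀ x, 1 ≤ x → |deriv (fun t => V t - m / t ^ 2) x| ≤ C * x ^ r) :
    ∀ᶠ x in atTop, deriv V x < 0 := by
  have hlim : Tendsto (fun x : ℝ => C * x ^ (r + 3)) atTop (𝓝 0) := by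
    simpa using (tendsto_rpow_neg_atTop (show 0 < -(r + 3) by linarith)).const_mul C
  filter_upwards [eventually_ge_atTop 1, hlim.eventually_lt_const (show 0 < 2 * m by positivity)]
    with x hx hsmall
  have hx0 : 0 < x := zero_lt_one.trans_le hx
  have herr : HasDerivAt (fun t => V t - m / t ^ 2) (deriv V x + 2 * m / x ^ 3) x := by
    refine ((hV x hx).hasDerivAt.sub ((hasDerivAt_const x m).div (hasDerivAt_pow 2 x)
      (by positivity))).congr_deriv ?_
    field_simp
    ring
  have hle := (le_abs_self _).trans (hdecay x hx)
  have hlt : C * x ^ r < 2 * m / x ^ 3 := by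
    rwa [lt_div_iff₀ (by positivity), mul_assoc, ← Real.rpow_add_natCast hx0.ne']
  rw [herr.deriv] at hle
  linarith

end InverseSquareDecay

theorem liouville_green_transform_general
    (V : ℝ → ℝ) (hV : ContDiff ℝ ∞ V) (hVpos : ∀ x, 0 ≤ x → 0 < V x)
    (hlim : Tendsto V atTop (𝓝 0)) (hderiv : ∀ᶠ x in atTop, deriv V x < 0) :
    ∃ E₀ > 0, ∀ h : ℝ, ∀ E ∈ Ioo 0 E₀,
      ∃ x₁ : ℝ, ∃ ζ q xinv Vt : ℝ → ℝ,
        0 < x₁ ∧ V0 V h x₁ = E ∧ (∀ x, 0 < x → V0 V h x = E → x = x₁) ∧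
        deriv (V0 V h) x₁ ≠ 0 ∧
        (∀ x, ζ x = Real.sign (x - x₁) *
          (abs ((3 : ℝ) / 2 * ∫ u in x₁..x, Real.sqrt |V0 V h u - E|)) ^ ((2 : ℝ) / 3)) ∧
        (∀ n : ℕ, ContDiffOn ℝ n ζ (Ici 0)) ∧
        StrictMonoOn ζ (Ici 0) ∧
        (∀ x ∈ Ici (0 : ℝ), 0 < q x) ∧
        (∀ x ∈ Ici (0 : ℝ), x ≠ x₁ → q x = -(V0 V h x - E) / ζ x) ∧
        (∀ x ∈ Ici (0 : ℝ), HasDerivAt ζ (Real.sqrt (q x)) x) ∧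
        (∀ x ∈ Ici (0 : ℝ), xinv (ζ x) = x) ∧
        (∀ x ∈ Ioi (0 : ℝ), Vt (ζ x) =
          1 / 4 * (q x)⁻¹ * (1 + x ^ 2)⁻¹
            - q x ^ (-(1 : ℝ) / 4) *
              deriv (deriv (fun z => q (xinv z) ^ ((1 : ℝ) / 4))) (ζ x)) ∧
        (∀ f f' f'' : ℝ → ℝ,
          (∀ x, HasDerivAt f (f' x) x) → (∀ x, HasDerivAt f' (f'' x) x) →
          (∀ x, -h ^ 2 * f'' x + (V x - E) * f x = 0) →
          ∀ x ∈ Ioi (0 : ℝ),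
            -h ^ 2 * deriv (deriv (fun z => q (xinv z) ^ ((1 : ℝ) / 4) * f (xinv z))) (ζ x)
              = (ζ x + h ^ 2 * Vt (ζ x)) * (q x ^ ((1 : ℝ) / 4) * f x)) := by
  obtain ⟨a, ha, E₀, hE₀, hturn⟩ :=
    exists_forall_isTurningPoint_V0 (hV.of_le (by simp)) hVpos hlim hderiv
  refine ⟨E₀, hE₀, fun h E hE => ?_⟩
  obtain ⟨c, hc, hT⟩ := hturn h E hE
  have hQ (n : ℕ∞) : ContDiffOn ℝ n (fun x => V0 V h x - E) (Ioi a) :=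
    ((contDiff_V0 hV h).sub contDiff_const).contDiffOn.of_le (by exact_mod_cast le_top)
  have hsub : Ici 0 ⊆ Ioi a := Ici_subset_Ioi.2 ha
  have hsub' : Ioi 0 ⊆ Ioi a := Ioi_subset_Ici_self.trans hsub
  have hmono := (hT.strictMonoOn_langerVariable (hQ 2)).mono hsub
  have hinv := hmono.injOn.leftInvOn_invFunOn
  have hqζ {x : ℝ} (hx : x ∈ Ioi a) := hT.langerCoeff_mul_langerVariable (hQ 2) hx
  have hstrict {x : ℝ} (hx : x ∈ Ioi a) := hT.hasStrictDerivAt_langerVariable (hQ 2) hx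
  refine ⟨c, langerVariable _ c, langerCoeff _ c, Function.invFunOn _ _, airyPotential _ _,
    hc, sub_eq_zero.1 hT.zero, fun x hx hxE => hT.eq_of_eq_zero (hsub' hx) (sub_eq_zero.2 hxE),
    by simpa [deriv_sub_const] using hT.deriv_neg.ne, fun _ => rfl,
    fun n => (hT.contDiffOn_langerVariable (hQ _)).mono hsub, hmono,
    fun x hx => hT.langerCoeff_pos (hQ 2) (hsub hx),
    fun x hx hxc => hT.langerCoeff_eq_div (hQ 2) (hsub hx) hxc,
    fun x hx => (hstrict (hsub hx)).hasDerivAt, fun x hx => hinv hx,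
    fun x hx => by simp only [airyPotential, hinv (Ioi_subset_Ici_self hx)],
    fun f f' f'' hf hf' hode x hx => perturbed_airy isOpen_Ioi
      (fun y hy => hT.langerCoeff_pos (hQ 2) (hsub' hy))
      ((hT.contDiffOn_langerCoeff (hQ _)).mono hsub') (fun y hy => hstrict (hsub' hy))
      (hinv.mono Ioi_subset_Ici_self) (fun y _ => hf y) (hf' x) hx (hqζ (hsub' hx)) (hode x)⟩

/-- there is `E₀ > 0` so that for `0 < E < E₀` the equation `V₀ = E` has a
unique simple zero `x₁ > 0`,
`ζ(x) = sign(x−x₁)|(3/2)∫_{x₁}^x √|V₀−E| du|^{2/3}` is a smooth change of variables on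
`x ≥ 0` with `q = −(V₀−E)/ζ > 0`, `dζ/dx = √q`, and any solution `f` of
`−ℏ²f'' + (V−E)f = 0` transforms under `w = q^{1/4}f` (as a function of `ζ`) into a
solution of the perturbed Airy equation `−ℏ²ẅ = (ζ + ℏ²Ṽ(ζ))w` with
`Ṽ = (1/4)q⁻¹⟨x⟩⁻² − q^{-1/4} d²(q^{1/4})/dζ²`. -/
theorem liouville_green_transform
    (V : ℝ → ℝ) (μp μm : ℝ)
    (hVsmooth : ∀ n : ℕ, ContDiff ℝ n V)
    (hVpos : ∀ x, 0 < V x)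
    (hμp : μp ≠ 0) (hμm : μm ≠ 0)
    (hVp : ∀ k : ℕ, ∃ C > 0, ∀ x : ℝ, 1 ≤ x →
      |iteratedDeriv k (fun t => V t - μp ^ 2 / t ^ 2) x| ≤ C * x ^ (-3 - k : ℝ))
    (hVm : ∀ k : ℕ, ∃ C > 0, ∀ x : ℝ, x ≤ -1 →
      |iteratedDeriv k (fun t => V t - μm ^ 2 / t ^ 2) x| ≤ C * |x| ^ (-3 - k : ℝ)) :
    ∃ E₀ > 0, ∀ h ∈ Set.Ioo (0 : ℝ) 1, ∀ E ∈ Set.Ioo 0 E₀,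
      ∃ x₁ : ℝ, ∃ ζ q xinv Vt : ℝ → ℝ,
        -- unique simple turning point on x > 0
        0 < x₁ ∧ V0 V h x₁ = E ∧ (∀ x, 0 < x → V0 V h x = E → x = x₁) ∧
        deriv (V0 V h) x₁ ≠ 0 ∧
        -- the Liouville–Green variable
        (∀ x, ζ x = Real.sign (x - x₁) *
          (abs ((3 : ℝ) / 2 * ∫ u in x₁..x, Real.sqrt |V0 V h u - E|)) ^ ((2 : ℝ) / 3)) ∧
        -- smooth change of variables on x ≥ 0
        (∀ n : ℕ, ContDiffOn ℝ n ζ (Set.Ici 0)) ∧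
        StrictMonoOn ζ (Set.Ici 0) ∧
        -- q = −(V₀−E)/ζ extends positively across the turning point, and ζ' = √q
        (∀ x ∈ Set.Ici (0 : ℝ), 0 < q x) ∧
        (∀ x ∈ Set.Ici (0 : ℝ), x ≠ x₁ → q x = -(V0 V h x - E) / ζ x) ∧
        (∀ x ∈ Set.Ici (0 : ℝ), HasDerivAt ζ (Real.sqrt (q x)) x) ∧
        -- xinv inverts ζ on x ≥ 0
        (∀ x ∈ Set.Ici (0 : ℝ), xinv (ζ x) = x) ∧
        -- Ṽ(ζ) = (1/4)q⁻¹⟨x⟩⁻² − q^{-1/4} d²(q^{1/4})/dζ²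
        (∀ x ∈ Set.Ioi (0 : ℝ), Vt (ζ x) =
          1 / 4 * (q x)⁻¹ * (1 + x ^ 2)⁻¹
            - q x ^ (-(1 : ℝ) / 4) *
              deriv (deriv (fun z => q (xinv z) ^ ((1 : ℝ) / 4))) (ζ x)) ∧
        -- the transformed equation: −ℏ² ẅ = (ζ + ℏ²Ṽ(ζ)) w with w = q^{1/4} f
        (∀ f f' f'' : ℝ → ℝ,
          (∀ x, HasDerivAt f (f' x) x) → (∀ x, HasDerivAt f' (f'' x) x) →
          (∀ x, -h ^ 2 * f'' x + (V x - E) * f x = 0) →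
          ∀ x ∈ Set.Ioi (0 : ℝ),
            -h ^ 2 * deriv (deriv (fun z => q (xinv z) ^ ((1 : ℝ) / 4) * f (xinv z))) (ζ x)
              = (ζ x + h ^ 2 * Vt (ζ x)) * (q x ^ ((1 : ℝ) / 4) * f x)) := by
  have hV : ContDiff ℝ ∞ V := contDiff_infty.2 hVsmooth
  obtain ⟨C, -, hC⟩ := hVp 0
  obtain ⟨C', -, hC'⟩ := hVp 1
  simp only [iteratedDeriv_zero] at hC
  simp only [iteratedDeriv_one] at hC'
  have hlim : Tendsto V atTop (𝓝 0) :=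
    tendsto_zero_of_abs_sub_div_sq_le (by norm_num) hC
  have hderiv : ∀ᶠ x in atTop, deriv V x < 0 :=
    eventually_deriv_neg_of_abs_deriv_sub_div_sq_le (by norm_num) (sq_pos_of_ne_zero hμp)
      (fun x _ => hV.differentiable (by simp) x) hC'
  obtain ⟨E₀, hE₀, H⟩ :=
    liouville_green_transform_general V hV (fun x _ => hVpos x) hlim hderiv
  exact ⟨E₀, hE₀, fun h _ => H h⟩
end

section
/- There exists x₀ > 0 and constants C_k such that the unique positive turning point satisfies, as E → 0+, x₁(E;ℏ) = c(ℏ) E^{-1/2} (1 + O(E^{1/2})) with c(ℏ) := √(μ₊² + ℏ²/4), where the error term is uniform in 0 < ℏ < 1 and satisfies ∂_E^k O(E^{1/2}) = O(E^{1/2 − k}) for every k ≥ 0. -/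
/-!
For small `E` the intermediate value theorem produces a far-out solution of `V₀ = E`, so uniqueness
forces `x₁` to be far out, where `V₀` and its derivatives are controlled by symbol estimates.
There `x₁` solves the ordinary differential equation `dx₁/dE = 1 / V₀'(x₁)`, whose right-hand side
is a symbol of order `3` in `x₁`; hence each derivative in `E` costs a factor `x₁ ^ 2 ≈ E⁻¹`.
Since `E = V₀(x₁)`, the relative error of `x₁` is `√(x₁² V₀(x₁) / c²) - 1`, a symbol of order `-1`
evaluated at `x₁`.
-/

open Set Filter Asymptotics
open scoped Topology ContDiff

lemma contDiffOn_of_hasDerivAt_comp {F : Type*} [NormedAddCommGroup F] [NormedSpace ℝ F] {g : F → F}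
    {y : ℝ → F} {s : Set ℝ} {T : Set F} (hg : ContDiffOn ℝ ∞ g T) (hs : IsOpen s)
    (hy : MapsTo y s T) (hd : ∀ t ∈ s, HasDerivAt y (g (y t)) t) : ContDiffOn ℝ ∞ y s := by
  refine contDiffOn_infty.2 fun n => ?_
  have hdiff : DifferentiableOn ℝ y s := fun t ht =>
    (hd t ht).differentiableAt.differentiableWithinAt
  induction n with
  | zero => exact contDiffOn_zero.2 hdiff.continuousOn
  | succ n ih =>
    rw [Nat.cast_succ, contDiffOn_succ_iff_derivWithin hs.uniqueDiffOn]
    refine ⟨hdiff, by simp, ?_⟩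
    exact ((hg.of_le (by exact_mod_cast le_top)).comp ih hy).congr fun t ht =>
      (hd t ht).hasDerivWithinAt.derivWithin (hs.uniqueDiffWithinAt ht)

/-- The family `f` is a symbol of order `m` on `(X, ∞)`: every `f i` is smooth there and its `k`-th
derivative is `O(x ^ (m - k))`, uniformly in `i`. Uniformity is encoded as a bound on the product
`ι × (X, ∞)`. -/
structure IsSymbol {ι : Type*} (X : ℝ) (m : ℤ) (f : ι → ℝ → ℝ) : Prop where
  contDiffOn : ∀ i, ContDiffOn ℝ ∞ (f i) (Ioi X)
  isBigO : ∀ k : ℕ, (fun p : ι × ℝ => iteratedDerivWithin k (f p.1) (Ioi X) p.2)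
    =O[𝓟 (univ ×ˢ Ioi X)] fun p => p.2 ^ (m - k)

namespace IsSymbol

variable {ι : Type*} {X Y : ℝ} {m l : ℤ} {f g : ι → ℝ → ℝ}

lemma isBigO_self (hf : IsSymbol X m f) :
    (fun p : ι × ℝ => f p.1 p.2) =O[𝓟 (univ ×ˢ Ioi X)] fun p => p.2 ^ m := by
  simpa using hf.isBigO 0

lemma congr (hf : IsSymbol X m f) (h : ∀ i, EqOn (f i) (g i) (Ioi X)) : IsSymbol X m g where
  contDiffOn i := (hf.contDiffOn i).congr fun _ hx => (h i hx).symm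
  isBigO k := (hf.isBigO k).congr' (eventually_principal.2 fun p hp =>
    iteratedDerivWithin_congr (h p.1) hp.2) .rfl

lemma mono_left (hf : IsSymbol X m f) (h : X ≤ Y) : IsSymbol Y m f where
  contDiffOn i := (hf.contDiffOn i).mono (Ioi_subset_Ioi h)
  isBigO k := by
    refine ((hf.isBigO k).mono (principal_mono.2 (prod_mono_right (Ioi_subset_Ioi h)))).congr'
      (eventually_principal.2 fun p hp => ?_) .rfl
    beta_reduce
    rw [iteratedDerivWithin_of_isOpen isOpen_Ioi hp.2,
      iteratedDerivWithin_of_isOpen isOpen_Ioi (h.trans_lt hp.2)]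

lemma mono_order (hX : 0 < X) (hf : IsSymbol X m f) (h : m ≤ l) : IsSymbol X l f where
  contDiffOn := hf.contDiffOn
  isBigO k := (hf.isBigO k).trans <| isBigO_principal.2 ⟨(X ^ (l - m))⁻¹, fun p ⟨_, hp⟩ => by
    have hp₀ : 0 < p.2 := hX.trans hp
    rw [Real.norm_of_nonneg (by positivity), Real.norm_of_nonneg (by positivity)]
    calc p.2 ^ (m - k) = (p.2 ^ (l - m))⁻¹ * p.2 ^ (l - k) := by
          rw [← zpow_neg, ← zpow_add₀ hp₀.ne']
          ring_nf
      _ ≤ (X ^ (l - m))⁻¹ * p.2 ^ (l - k) := by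
          gcongr
          · exact zpow_le_zpow_left₀ (sub_nonneg.2 h) hX.le hp.le⟩

lemma deriv (hf : IsSymbol X m f) : IsSymbol X (m - 1) fun i => _root_.deriv (f i) where
  contDiffOn i := (hf.contDiffOn i).deriv_of_isOpen isOpen_Ioi (by simp)
  isBigO k := by
    refine (hf.isBigO (k + 1)).congr' (eventually_principal.2 fun p hp => ?_)
      (.of_eq (by ext; push_cast; ring_nf))
    beta_reduce
    rw [iteratedDerivWithin_succ']
    exact iteratedDerivWithin_congr (fun x hx => derivWithin_of_isOpen isOpen_Ioi hx) hp.2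

lemma differentiableAt (hf : IsSymbol X m f) (i : ι) {x : ℝ} (hx : X < x) :
    DifferentiableAt ℝ (f i) x :=
  ((hf.contDiffOn i).differentiableOn (by simp)).differentiableAt (Ioi_mem_nhds hx)

lemma add (hf : IsSymbol X m f) (hg : IsSymbol X m g) : IsSymbol X m fun i x => f i x + g i x where
  contDiffOn i := (hf.contDiffOn i).add (hg.contDiffOn i)
  isBigO k := ((hf.isBigO k).add (hg.isBigO k)).congr' (eventually_principal.2 fun p hp =>
    (iteratedDerivWithin_fun_add hp.2 (uniqueDiffOn_Ioi X)
      ((hf.contDiffOn p.1 _ hp.2).of_le (by exact_mod_cast le_top))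
      ((hg.contDiffOn p.1 _ hp.2).of_le (by exact_mod_cast le_top))).symm) .rfl

lemma mul (hX : 0 ≤ X) (hf : IsSymbol X m f) (hg : IsSymbol X l g) :
    IsSymbol X (m + l) fun i x => f i x * g i x where
  contDiffOn i := (hf.contDiffOn i).mul (hg.contDiffOn i)
  isBigO k := by
    have hterm : ∀ j ∈ Finset.range (k + 1),
        (fun p : ι × ℝ => k.choose j * iteratedDerivWithin j (f p.1) (Ioi X) p.2 *
          iteratedDerivWithin (k - j) (g p.1) (Ioi X) p.2)
        =O[𝓟 (univ ×ˢ Ioi X)] fun p => p.2 ^ (m + l - k) := fun j hj => by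
      refine (((hf.isBigO j).const_mul_left _).mul (hg.isBigO (k - j))).congr' .rfl
        (eventually_principal.2 fun p hp => ?_)
      beta_reduce
      rw [← zpow_add₀ (hX.trans_lt hp.2).ne', Nat.cast_sub (Finset.mem_range_succ_iff.1 hj)]
      congr 1
      ring
    refine (IsBigO.fun_sum hterm).congr' (eventually_principal.2 fun p hp => ?_) .rfl
    exact (iteratedDerivWithin_mul hp.2 (uniqueDiffOn_Ioi X)
      ((hf.contDiffOn p.1 _ hp.2).of_le (by exact_mod_cast le_top))
      ((hg.contDiffOn p.1 _ hp.2).of_le (by exact_mod_cast le_top))).symm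

lemma zpow (hX : 0 ≤ X) (m : ℤ) : IsSymbol X m fun (_ : ι) x => x ^ m where
  contDiffOn _ _ hx := (analyticAt_id.zpow (hX.trans_lt hx).ne').contDiffAt.contDiffWithinAt
  isBigO k := ((isBigO_refl _ _).const_mul_left (∏ j ∈ Finset.range k, ((m : ℝ) - j))).congr'
    (eventually_principal.2 fun _ hp => (iteratedDerivWithin_zpow m k isOpen_Ioi hp.2).symm) .rfl

lemma const {a : ι → ℝ} {C : ℝ} (ha : ∀ i, |a i| ≤ C) : IsSymbol X 0 fun i _ => a i where
  contDiffOn _ := contDiffOn_const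
  isBigO
    | 0 => isBigO_principal.2 ⟨C, fun p _ => by simpa using ha p.1⟩
    | k + 1 => by simpa [iteratedDerivWithin_const] using isBigO_zero _ _

lemma const_mul {a : ι → ℝ} {C : ℝ} (hX : 0 ≤ X) (ha : ∀ i, |a i| ≤ C) (hf : IsSymbol X m f) :
    IsSymbol X m fun i x => a i * f i x := by
  simpa using (const ha).mul hX hf

lemma exists_norm_iteratedDerivWithin_le_pow (hX : 0 ≤ X) (hf : IsSymbol X 0 f) (n : ℕ) :
    ∃ D, ∀ i, ∀ x ∈ Ioi X, ∀ j, 1 ≤ j → j ≤ n →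
      ‖iteratedDerivWithin j (f i) (Ioi X) x‖ ≤ (D * x⁻¹) ^ j := by
  choose C hC using fun j => isBigO_principal.1 (hf.isBigO j)
  obtain ⟨M, hM⟩ := ((finite_Iic n).image C).bddAbove
  refine ⟨max M 1, fun i x hx j hj hjn => ?_⟩
  have hx₀ : 0 < x := hX.trans_lt hx
  calc _ ≤ C j * ‖x ^ ((0 : ℤ) - j)‖ := hC j (i, x) ⟨mem_univ i, hx⟩
    _ = C j * x⁻¹ ^ j := by
      rw [Real.norm_of_nonneg (by positivity), zero_sub, zpow_neg, zpow_natCast, inv_pow]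
    _ ≤ max M 1 ^ j * x⁻¹ ^ j := by
      gcongr
      calc C j ≤ max M 1 := (hM (mem_image_of_mem C hjn)).trans (le_max_left M 1)
        _ ≤ max M 1 ^ j := le_self_pow₀ (le_max_right M 1) (by omega)
    _ = _ := (mul_pow ..).symm

lemma comp {F : ℝ → ℝ} {K T : Set ℝ} (hX : 0 ≤ X) (hf : IsSymbol X 0 f) (hT : IsOpen T)
    (hF : ContDiffOn ℝ ∞ F T) (hK : IsCompact K) (hKT : K ⊆ T)
    (hfK : ∀ i, MapsTo (f i) (Ioi X) K) : IsSymbol X 0 fun i x => F (f i x) where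
  contDiffOn i := hF.comp (hf.contDiffOn i) ((hfK i).mono_right hKT)
  isBigO n := by
    have hFbound (j : ℕ) : ∃ C, ∀ y ∈ K, ‖iteratedDerivWithin j F T y‖ ≤ C :=
      hK.exists_bound_of_continuousOn ((hF.continuousOn_iteratedDerivWithin
        (by exact_mod_cast le_top) hT.uniqueDiffOn).mono hKT)
    choose C hC using hFbound
    obtain ⟨M, hM⟩ := ((finite_Iic n).image C).bddAbove
    obtain ⟨D, hD⟩ := hf.exists_norm_iteratedDerivWithin_le_pow hX n
    refine isBigO_principal.2 ⟨n.factorial * M * D ^ n, fun p hp => ?_⟩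
    have hx : 0 < p.2 := hX.trans_lt hp.2
    have hcomp := norm_iteratedFDerivWithin_comp_le hF (hf.contDiffOn p.1)
      (by exact_mod_cast le_top) hT.uniqueDiffOn (uniqueDiffOn_Ioi X)
      ((hfK p.1).mono_right hKT) hp.2 (n := n) (C := M) (D := D * p.2⁻¹)
    simp only [norm_iteratedFDerivWithin_eq_norm_iteratedDerivWithin] at hcomp
    calc _ ≤ n.factorial * M * (D * p.2⁻¹) ^ n :=
          hcomp (fun j hj => (hC j _ (hfK p.1 hp.2)).trans (hM (mem_image_of_mem C hj)))
            (hD p.1 p.2 hp.2)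
      _ = n.factorial * M * D ^ n * ‖p.2 ^ ((0 : ℤ) - n)‖ := by
          rw [Real.norm_of_nonneg (by positivity), zero_sub, zpow_neg, zpow_natCast, mul_pow,
            inv_pow, mul_assoc _ (D ^ n)]

lemma tendstoUniformly_zero (hX : 0 ≤ X) (hf : IsSymbol X m f) (hm : m < 0) :
    TendstoUniformly (fun x i => f i x) 0 atTop := by
  obtain ⟨C, hC⟩ := isBigO_principal.1 hf.isBigO_self
  have hlim : Tendsto (fun x : ℝ => C * x ^ m) atTop (𝓝 0) := by
    simpa using (tendsto_zpow_atTop_zero hm).const_mul C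
  refine Metric.tendstoUniformly_iff.2 fun ε hε => ?_
  filter_upwards [hlim.eventually_lt_const hε, eventually_gt_atTop X] with x hxε hx i
  have hx₀ : 0 < x := hX.trans_lt hx
  have := hC (i, x) ⟨mem_univ i, hx⟩
  rw [Real.norm_of_nonneg (by positivity : 0 ≤ x ^ m)] at this
  simpa [dist_eq_norm] using this.trans_lt hxε

section Composition

variable {s : Set ℝ} {y : ι → ℝ → ℝ}

/- Along the flow, `d/dt` acts on symbols as `f ↦ f' * g`, which raises the order by `l - 1`. -/
lemma iteratedDerivWithin_comp_isBigO (hX : 0 ≤ X) (hg : IsSymbol X l g) (hs : IsOpen s)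
    (hy : ∀ i, MapsTo (y i) s (Ioi X)) (hd : ∀ i, ∀ t ∈ s, HasDerivAt (y i) (g i (y i t)) t)
    (hf : IsSymbol X m f) (n : ℕ) :
    (fun p : ι × ℝ => iteratedDerivWithin n (fun t => f p.1 (y p.1 t)) s p.2)
      =O[𝓟 (univ ×ˢ s)] fun p => y p.1 p.2 ^ (m + n * (l - 1)) := by
  induction n generalizing m f with
  | zero =>
    have hmaps : Tendsto (fun p : ι × ℝ => (p.1, y p.1 p.2)) (𝓟 (univ ×ˢ s))
        (𝓟 (univ ×ˢ Ioi X)) :=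
      tendsto_principal_principal.2 fun p hp => ⟨hp.1, hy p.1 hp.2⟩
    simpa [Function.comp_def] using hf.isBigO_self.comp_tendsto hmaps
  | succ n ih =>
    refine (ih (hf.deriv.mul hX hg)).congr' (eventually_principal.2 fun p hp => ?_)
      (.of_eq (by ext; push_cast; ring_nf))
    beta_reduce
    rw [iteratedDerivWithin_succ']
    refine iteratedDerivWithin_congr (fun t ht => Eq.symm ?_) hp.2
    exact ((hf.differentiableAt p.1 (hy p.1 ht)).hasDerivAt.comp t (hd p.1 t ht)).hasDerivWithinAt
      |>.derivWithin (hs.uniqueDiffWithinAt ht)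

lemma iteratedDerivWithin_comp_isBigO_rpow {r : ℝ} (hX : 0 ≤ X) (hg : IsSymbol X l g)
    (hs : IsOpen s) (hs₀ : s ⊆ Ioi 0) (hy : ∀ i, MapsTo (y i) s (Ioi X))
    (hd : ∀ i, ∀ t ∈ s, HasDerivAt (y i) (g i (y i t)) t)
    (hyr : (fun p : ι × ℝ => y p.1 p.2) =Θ[𝓟 (univ ×ˢ s)] fun p => p.2 ^ r)
    (hf : IsSymbol X m f) (n : ℕ) :
    (fun p : ι × ℝ => iteratedDerivWithin n (fun t => f p.1 (y p.1 t)) s p.2)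
      =O[𝓟 (univ ×ˢ s)] fun p => p.2 ^ (r * (m + n * (l - 1))) := by
  refine ((iteratedDerivWithin_comp_isBigO hX hg hs hy hd hf n).trans
    (hyr.zpow (m + n * (l - 1))).isBigO).congr' .rfl (eventually_principal.2 fun p hp => ?_)
  beta_reduce
  rw [← Real.rpow_mul_intCast (le_of_lt (hs₀ hp.2))]
  push_cast
  rfl

end Composition

end IsSymbol

lemma abs_inv_le {A b : ℝ} (hA : 0 < A) (hb : A ≤ b) : |b⁻¹| ≤ A⁻¹ := by
  rw [abs_of_pos (inv_pos.2 (hA.trans_le hb))]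
  exact inv_anti₀ hA hb

/-- The potentials `U i` are asymptotic to the inverse square potentials `a i / x ^ 2`, up to
symbols of order `-3`. -/
def IsInverseSquare {ι : Type*} (X : ℝ) (a : ι → ℝ) (U : ι → ℝ → ℝ) : Prop :=
  IsSymbol X (-3) fun i x => U i x - a i / x ^ 2

namespace IsInverseSquare

variable {ι : Type*} {X Y A B : ℝ} {a : ι → ℝ} {U : ι → ℝ → ℝ}

lemma mono_left (hU : IsInverseSquare X a U) (h : X ≤ Y) : IsInverseSquare Y a U :=
  IsSymbol.mono_left hU h

lemma isSymbol (hU : IsInverseSquare X a U) (hX : 0 < X) (ha : ∀ i, |a i| ≤ B) :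
    IsSymbol X (-2) U := by
  refine ((hU.mono_order hX (by norm_num)).add
    ((IsSymbol.zpow hX.le (-2)).const_mul hX.le ha)).congr fun i x _ => ?_
  simp [zpow_neg, div_eq_mul_inv, zpow_ofNat]

lemma isSymbol_sq_mul_div_sub_one (hU : IsInverseSquare X a U) (hX : 0 ≤ X) (hA : 0 < A)
    (ha : ∀ i, A ≤ a i) : IsSymbol X (-1) fun i x => x ^ 2 * U i x / a i - 1 := by
  refine (((IsSymbol.zpow hX 2).mul hX hU).const_mul hX
    fun i => abs_inv_le hA (ha i)).congr fun i x hx => ?_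
  have hx₀ : x ≠ 0 := (hX.trans_lt hx).ne'
  have ha₀ : a i ≠ 0 := (hA.trans_le (ha i)).ne'
  norm_cast
  field_simp

lemma isSymbol_cube_mul_deriv_div_add_two (hU : IsInverseSquare X a U) (hX : 0 < X) (hA : 0 < A)
    (ha : ∀ i, a i ∈ Icc A B) : IsSymbol X (-1) fun i x => x ^ 3 * deriv (U i) x / a i + 2 := by
  have hUsym : IsSymbol X (-2) U := hU.isSymbol hX fun i =>
    abs_le.2 ⟨by linarith [(ha i).1, (ha i).2], (ha i).2⟩
  refine (((IsSymbol.zpow hX.le 3).mul hX.le hU.deriv).const_mul hX.le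
    fun i => abs_inv_le hA (ha i).1).congr
    fun i x hx => ?_
  have hx₀ : x ≠ 0 := (hX.trans hx).ne'
  have ha₀ : a i ≠ 0 := (hA.trans_le (ha i).1).ne'
  have hderiv : deriv (fun x => U i x - a i / x ^ 2) x = deriv (U i) x + 2 * a i / x ^ 3 := by
    have hsq := ((hasDerivAt_pow 2 x).fun_inv (pow_ne_zero 2 hx₀)).const_mul (a i)
    simp only [← div_eq_mul_inv] at hsq
    rw [((hUsym.differentiableAt i hx).hasDerivAt.fun_sub hsq).deriv]
    field_simp
    ring
  beta_reduce
  rw [hderiv]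
  norm_cast
  field_simp

lemma exists_ratio_mem_Icc (hU : IsInverseSquare X a U) (hX : 0 < X) (hA : 0 < A)
    (ha : ∀ i, a i ∈ Icc A B) :
    ∃ Y, X ≤ Y ∧ ∀ i, ∀ x ∈ Ioi Y, x ^ 2 * U i x / a i ∈ Icc (1 / 2) 2 ∧
      x ^ 3 * deriv (U i) x / a i ∈ Icc (-3) (-1) := by
  have hratio := Metric.tendstoUniformly_iff.1 ((hU.isSymbol_sq_mul_div_sub_one hX.le hA
    fun i => (ha i).1).tendstoUniformly_zero hX.le (by norm_num)) (1 / 2) (by norm_num)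
  have hderiv := Metric.tendstoUniformly_iff.1 ((hU.isSymbol_cube_mul_deriv_div_add_two hX hA
    ha).tendstoUniformly_zero hX.le (by norm_num)) 1 one_pos
  obtain ⟨Y, hY⟩ := eventually_atTop.1 (hratio.and hderiv)
  refine ⟨max X Y, le_max_left X Y, fun i x hx => ?_⟩
  obtain ⟨hr, hd⟩ := hY x ((le_max_right X Y).trans (le_of_lt hx))
  have hr := abs_lt.1 (hr i)
  have hd := abs_lt.1 (hd i)
  simp only [Pi.zero_apply] at hr hd
  constructor <;> constructor <;> linarith

lemma isSymbol_inv_deriv (hU : IsInverseSquare X a U) (hX : 0 < X) (hA : 0 < A)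
    (ha : ∀ i, a i ∈ Icc A B)
    (hderiv : ∀ i, ∀ x ∈ Ioi X, x ^ 3 * deriv (U i) x / a i ∈ Icc (-3) (-1)) :
    IsSymbol X 3 fun i x => (deriv (U i) x)⁻¹ := by
  have hratio : IsSymbol X 0 fun i x => x ^ 3 * deriv (U i) x / a i :=
    (((hU.isSymbol_cube_mul_deriv_div_add_two hX hA ha).mono_order hX (by norm_num)).add
      (IsSymbol.const (a := fun _ => -2) fun _ => le_rfl)).congr fun i x _ => by simp
  have hinv := hratio.comp hX.le isOpen_ne (contDiffOn_inv ℝ) isCompact_Icc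
    (fun v hv => (hv.2.trans_lt (by norm_num)).ne) hderiv
  refine ((IsSymbol.zpow hX.le 3).mul hX.le (hinv.const_mul hX.le
    fun i => abs_inv_le hA (ha i).1)).congr fun i x hx => ?_
  have hx₀ : x ≠ 0 := (hX.trans hx).ne'
  have ha₀ : a i ≠ 0 := (hA.trans_le (ha i).1).ne'
  norm_cast
  field_simp

lemma isSymbol_sqrt_ratio_sub_one (hU : IsInverseSquare X a U) (hX : 0 < X) (hA : 0 < A)
    (ha : ∀ i, A ≤ a i) (hratio : ∀ i, ∀ x ∈ Ioi X, x ^ 2 * U i x / a i ∈ Icc (1 / 2) 2) :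
    IsSymbol X (-1) fun i x => √(x ^ 2 * U i x / a i) - 1 := by
  have hsub := hU.isSymbol_sq_mul_div_sub_one hX.le hA ha
  have hsym : IsSymbol X 0 fun i x => x ^ 2 * U i x / a i :=
    ((hsub.mono_order hX (by norm_num)).add
      (IsSymbol.const (a := fun _ => 1) fun _ => le_rfl)).congr fun i x _ => by simp
  have hF : ContDiffOn ℝ ∞ (fun q => (1 + √q)⁻¹) (Ioi 0) := fun q (hq : 0 < q) =>
    ((contDiffAt_const.add (contDiffAt_id.sqrt hq.ne')).inv
      (by positivity)).contDiffWithinAt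
  have hinv := hsym.comp hX.le isOpen_Ioi hF isCompact_Icc
    (fun q hq => lt_of_lt_of_le (by norm_num) hq.1) hratio
  refine (hsub.mul hX.le hinv).congr fun i x hx => ?_
  have hnonneg : 0 ≤ x ^ 2 * U i x / a i := by linarith [(hratio i x hx).1]
  beta_reduce
  rw [mul_inv_eq_iff_eq_mul₀ (by positivity)]
  linarith [Real.mul_self_sqrt hnonneg]

end IsInverseSquare

/-- For every energy `E ∈ s`, `y E` is the only positive turning point of the potential `U`, that
is, the only positive solution of `U x = E`. -/
def IsUniqueTurningPoint (U y : ℝ → ℝ) (s : Set ℝ) : Prop :=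
  ∀ E ∈ s, 0 < y E ∧ U (y E) = E ∧ ∀ x, 0 < x → U x = E → x = y E

namespace IsUniqueTurningPoint

variable {U y : ℝ → ℝ} {s t : Set ℝ} {X E x v a : ℝ}

lemma mono (hy : IsUniqueTurningPoint U y s) (h : t ⊆ s) : IsUniqueTurningPoint U y t :=
  fun E hE => hy E (h hE)

lemma lt_of_tendsto_of_le (hy : IsUniqueTurningPoint U y s) (hE : E ∈ s) (hX : 0 ≤ X)
    (hU : ContinuousOn U (Ioi X)) (hv : Tendsto U atTop (𝓝 v)) (hvE : v < E) (hx : X < x)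
    (hEx : E ≤ U x) : X < y E := by
  have himage : Ioc v (U x) ⊆ U '' Ici x :=
    isPreconnected_Ici.intermediate_value_Ioc self_mem_Ici
      (le_principal_iff.2 (Ici_mem_atTop x)) (hU.mono (Ici_subset_Ioi.2 hx)) hv
  obtain ⟨z, hxz, hzE⟩ := himage ⟨hvE, hEx⟩
  have hXz : X < z := hx.trans_le hxz
  exact (hy E hE).2.2 z (hX.trans_lt hXz) hzE ▸ hXz

lemma hasDerivAt (hy : IsUniqueTurningPoint U y s) (hE : s ∈ 𝓝 E)
    (hU : ContDiffAt ℝ 1 U (y E)) (hU' : deriv U (y E) ≠ 0) :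
    HasDerivAt y (deriv U (y E))⁻¹ E := by
  obtain ⟨hpos, heq, -⟩ := hy E (mem_of_mem_nhds hE)
  have hstrict : HasStrictDerivAt U (deriv U (y E)) (y E) := hU.hasStrictDerivAt one_ne_zero
  have hinv := (hstrict.to_localInverse hU').hasDerivAt
  have htendsto := (hstrict.hasStrictFDerivAt_equiv hU').localInverse_tendsto
  have hright := hstrict.eventually_right_inverse hU'
  rw [heq] at hinv htendsto hright
  refine hinv.congr_of_eventuallyEq ?_
  filter_upwards [hright, htendsto.eventually_const_lt hpos, hE] with z hz hz_pos hzs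
  exact ((hy z hzs).2.2 _ hz_pos hz).symm

lemma eq_sqrt_mul_rpow_mul_sqrt (hy : IsUniqueTurningPoint U y s) (hE : E ∈ s) (hE₀ : 0 < E)
    (ha : 0 < a) : y E = √a * E ^ (-(1 : ℝ) / 2) * √(y E ^ 2 * U (y E) / a) := by
  obtain ⟨hpos, heq, -⟩ := hy E hE
  rw [heq, Real.sqrt_div' _ ha.le, Real.sqrt_mul (sq_nonneg _), Real.sqrt_sq hpos.le, neg_div,
    Real.rpow_neg hE₀.le, ← Real.sqrt_eq_rpow]
  field_simp

end IsUniqueTurningPoint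

lemma isTheta_rpow_of_sq_mul_mem_Icc {α : Type*} {S : Set α} {y E : α → ℝ} {A B : ℝ} (hA : 0 < A)
    (hy : ∀ p ∈ S, 0 < y p) (hE : ∀ p ∈ S, 0 < E p) (h : ∀ p ∈ S, y p ^ 2 * E p ∈ Icc A B) :
    y =Θ[𝓟 S] fun p => E p ^ (-(1 : ℝ) / 2) := by
  have hsq : (fun p => y p ^ 2) =Θ[𝓟 S] fun p => (E p)⁻¹ := by
    refine ⟨isBigO_principal.2 ⟨B, fun p hp => ?_⟩, isBigO_principal.2 ⟨A⁻¹, fun p hp => ?_⟩⟩ <;>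
    have hEp := hE p hp <;>
    simp only [norm_inv, norm_pow, Real.norm_of_nonneg hEp.le, Real.norm_of_nonneg (hy p hp).le]
    · rw [← div_eq_mul_inv, le_div_iff₀ hEp]
      exact (h p hp).2
    · rw [← div_eq_inv_mul, le_div_iff₀ hA, inv_mul_le_iff₀ hEp, mul_comm]
      exact (h p hp).1
  have hsqrt_sq : y =ᶠ[𝓟 S] fun p => (y p ^ 2) ^ (1 / 2 : ℝ) :=
    eventually_principal.2 fun p hp => by
      beta_reduce
      rw [← Real.sqrt_eq_rpow, Real.sqrt_sq (hy p hp).le]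
  have hsqrt_inv : (fun p => (E p)⁻¹ ^ (1 / 2 : ℝ)) =ᶠ[𝓟 S] fun p => E p ^ (-(1 : ℝ) / 2) :=
    eventually_principal.2 fun p hp => by
      beta_reduce
      rw [Real.inv_rpow (hE p hp).le, neg_div, Real.rpow_neg (hE p hp).le]
  exact hsqrt_sq.trans_isTheta <| (hsq.rpow (.of_forall fun p => sq_nonneg (y p))
    (eventually_principal.2 fun p hp => inv_nonneg.2 (hE p hp).le)).trans_eventuallyEq hsqrt_inv

namespace IsInverseSquare

variable {ι : Type*} {X A B E₀ : ℝ} {a : ι → ℝ} {U y : ι → ℝ → ℝ}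

lemma exists_forall_lt_turningPoint (hU : IsInverseSquare X a U) (hX : 0 < X) (hE₀ : 0 < E₀)
    (hA : 0 < A) (ha : ∀ i, a i ∈ Icc A B)
    (hratio : ∀ i, ∀ x ∈ Ioi X, 1 / 2 ≤ x ^ 2 * U i x / a i)
    (hy : ∀ i, IsUniqueTurningPoint (U i) (y i) (Ioo 0 E₀)) :
    ∃ E₁, 0 < E₁ ∧ E₁ ≤ E₀ ∧ ∀ i, ∀ E ∈ Ioo 0 E₁, X < y i E := by
  have hsym := hU.isSymbol hX fun i => abs_le.2 ⟨by linarith [(ha i).1, (ha i).2], (ha i).2⟩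
  refine ⟨min E₀ (A / (2 * (X + 1) ^ 2)), by positivity, min_le_left _ _, fun i E hE => ?_⟩
  have hlim : Tendsto (U i) atTop (𝓝 0) :=
    (hsym.tendstoUniformly_zero hX.le (by norm_num)).tendsto_at i
  refine (hy i).lt_of_tendsto_of_le ⟨hE.1, hE.2.trans_le (min_le_left _ _)⟩ hX.le
    (hsym.contDiffOn i).continuousOn hlim hE.1 (lt_add_one X) ?_
  calc E ≤ A / (2 * (X + 1) ^ 2) := hE.2.le.trans (min_le_right _ _)
    _ ≤ a i / (2 * (X + 1) ^ 2) := by gcongr; exact (ha i).1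
    _ ≤ U i (X + 1) := by
      have := hratio i (X + 1) (lt_add_one X)
      rw [le_div_iff₀ (hA.trans_le (ha i).1)] at this
      rw [div_le_iff₀ (by positivity)]
      linarith

lemma turningPoint_isTheta {s : Set ℝ} (hX : 0 ≤ X) (hA : 0 < A) (ha : ∀ i, a i ∈ Icc A B)
    (hratio : ∀ i, ∀ x ∈ Ioi X, x ^ 2 * U i x / a i ∈ Icc (1 / 2) 2)
    (hs : s ⊆ Ioi 0) (hy : ∀ i, IsUniqueTurningPoint (U i) (y i) s)
    (hlt : ∀ i, MapsTo (y i) s (Ioi X)) :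
    (fun p : ι × ℝ => y p.1 p.2) =Θ[𝓟 (univ ×ˢ s)] fun p => p.2 ^ (-(1 : ℝ) / 2) := by
  refine isTheta_rpow_of_sq_mul_mem_Icc (A := A / 2) (B := 2 * B) (by positivity)
    (fun p hp => hX.trans_lt (hlt p.1 hp.2)) (fun p hp => hs hp.2) fun p hp => ?_
  have hap := hA.trans_le (ha p.1).1
  have hr := hratio p.1 _ (hlt p.1 hp.2)
  rw [(hy p.1 p.2 hp.2).2.1, mem_Icc, le_div_iff₀ hap, div_le_iff₀ hap] at hr
  constructor <;> linarith [(ha p.1).1, (ha p.1).2]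

lemma turningPoint_hasDerivAt {s : Set ℝ} (hU : IsInverseSquare X a U) (hX : 0 < X) (hA : 0 < A)
    (ha : ∀ i, a i ∈ Icc A B)
    (hderiv : ∀ i, ∀ x ∈ Ioi X, x ^ 3 * deriv (U i) x / a i ∈ Icc (-3) (-1))
    (hs : IsOpen s) (hy : ∀ i, IsUniqueTurningPoint (U i) (y i) s)
    (hlt : ∀ i, MapsTo (y i) s (Ioi X)) (i : ι) {E : ℝ} (hE : E ∈ s) :
    HasDerivAt (y i) (deriv (U i) (y i E))⁻¹ E := by
  have hUsym := hU.isSymbol hX fun i => abs_le.2 ⟨by linarith [(ha i).1, (ha i).2], (ha i).2⟩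
  refine (hy i).hasDerivAt (hs.mem_nhds hE) (((hUsym.contDiffOn i).contDiffAt
    (Ioi_mem_nhds (hlt i hE))).of_le (by exact_mod_cast le_top)) fun hzero => ?_
  have := (hderiv i _ (hlt i hE)).2
  norm_num [hzero] at this

end IsInverseSquare

lemma isSymbol_inv_one_add_sq_sub_inv_sq {ι : Type*} :
    IsSymbol 1 (-4) fun (_ : ι) x => (1 + x ^ 2)⁻¹ - (x ^ 2)⁻¹ := by
  have hinv : IsSymbol 1 0 fun (_ : ι) x => -(1 + x ^ (-2 : ℤ))⁻¹ := by
    refine ((IsSymbol.zpow zero_le_one (-2)).mono_order one_pos (by norm_num)).comp zero_le_one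
      (isOpen_Ioi (a := -1)) (F := fun w => -(1 + w)⁻¹) (K := Icc 0 1) ?_ isCompact_Icc
      (fun w hw => neg_one_lt_zero.trans_le hw.1) fun _ x hx => ?_
    · exact ((contDiffOn_const.add contDiffOn_id).inv fun w hw =>
        (neg_lt_iff_pos_add'.1 hw).ne').neg
    · exact ⟨zpow_nonneg (one_pos.trans hx).le _,
        zpow_le_one_of_nonpos₀ (le_of_lt hx) (by norm_num)⟩
  refine ((IsSymbol.zpow zero_le_one (-4)).mul zero_le_one hinv).congr fun _ x hx => ?_
  have hx₀ : x ≠ 0 := (one_pos.trans hx).ne'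
  have hx₁ : 1 + x ^ 2 ≠ 0 := by positivity
  simp only [zpow_neg, zpow_ofNat]
  field_simp
  ring

lemma isInverseSquare_V0 {V : ℝ → ℝ} {μ : ℝ} (hV : ContDiffOn ℝ ∞ V (Ioi 1))
    (hVp : ∀ k : ℕ, ∃ C > 0, ∀ x : ℝ, 1 ≤ x →
      |iteratedDeriv k (fun t => V t - μ ^ 2 / t ^ 2) x| ≤ C * x ^ (-3 - k : ℝ)) :
    IsInverseSquare 1 (fun h : Ioo (0 : ℝ) 1 => μ ^ 2 + (h : ℝ) ^ 2 / 4) fun h => V0 V h := by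
  have hVsym : IsSymbol 1 (-3) fun (_ : Ioo (0 : ℝ) 1) x => V x - μ ^ 2 / x ^ 2 := by
    refine ⟨fun _ => hV.sub (contDiffOn_const.div (contDiffOn_id.pow 2) fun x hx =>
      pow_ne_zero 2 (one_pos.trans hx).ne'), fun k => ?_⟩
    obtain ⟨C, -, hC⟩ := hVp k
    refine isBigO_principal.2 ⟨C, fun p hp => ?_⟩
    have hp₀ : 0 < p.2 := one_pos.trans hp.2
    rw [iteratedDerivWithin_of_isOpen isOpen_Ioi hp.2,
      Real.norm_of_nonneg (zpow_nonneg hp₀.le _), ← Real.rpow_intCast]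
    push_cast
    exact hC p.2 (le_of_lt hp.2)
  have hcoeff (h : Ioo (0 : ℝ) 1) : |(h : ℝ) ^ 2 / 4| ≤ 1 := by
    rw [abs_of_nonneg (by positivity)]
    nlinarith [h.2.1, h.2.2]
  have hbracket := (isSymbol_inv_one_add_sq_sub_inv_sq.mono_order one_pos
    (l := -3) (by norm_num)).const_mul zero_le_one hcoeff
  refine (hVsym.add hbracket).congr fun h x _ => ?_
  simp only [V0]
  ring

theorem turning_point_asymptotics_general {ι : Type*} {S : Set ι} {U : ι → ℝ → ℝ} {a : ι → ℝ}
    {X A B E₀ : ℝ} (hX : 0 < X) (hE₀ : 0 < E₀) (hA : 0 < A) (ha : ∀ h ∈ S, a h ∈ Icc A B)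
    (hU : IsInverseSquare X (fun h : S => a h) fun h : S => U h) (x₁ : ℝ → ι → ℝ)
    (hx₁ : ∀ h ∈ S, IsUniqueTurningPoint (U h) (fun E => x₁ E h) (Ioo 0 E₀)) :
    ∃ E₁, 0 < E₁ ∧ E₁ ≤ E₀ ∧ ∃ err : ℝ → ι → ℝ,
      (∀ h ∈ S, ∀ E ∈ Ioo 0 E₁, x₁ E h = √(a h) * E ^ (-(1 : ℝ) / 2) * (1 + err E h)) ∧
      (∀ h ∈ S, ∀ n : ℕ, ContDiffOn ℝ n (fun E => err E h) (Ioo 0 E₁)) ∧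
      (∀ k : ℕ, ∃ C > 0, ∀ h ∈ S, ∀ E ∈ Ioo 0 E₁,
        |iteratedDerivWithin k (fun E' => err E' h) (Ioo 0 E₁) E| ≤ C * E ^ ((1 : ℝ) / 2 - k)) := by
  have ha' (h : S) : a h ∈ Icc A B := ha h h.2
  obtain ⟨Y, hXY, hY⟩ := hU.exists_ratio_mem_Icc hX hA ha'
  have hY₀ : 0 < Y := hX.trans_le hXY
  have hUY := hU.mono_left hXY
  have hratio := fun h x hx => (hY h x hx).1
  have hderiv := fun h x hx => (hY h x hx).2
  obtain ⟨E₁, hE₁, hE₁₀, hlt⟩ := hUY.exists_forall_lt_turningPoint hY₀ hE₀ hA ha'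
    (fun h x hx => (hratio h x hx).1) (y := fun h : S => (x₁ · h)) fun h => hx₁ h h.2
  have hy (h : S) := (hx₁ h h.2).mono (Ioo_subset_Ioo_right hE₁₀)
  have hvel := hUY.isSymbol_inv_deriv hY₀ hA ha' hderiv
  have herr := hUY.isSymbol_sqrt_ratio_sub_one hY₀ hA (fun h => (ha' h).1) hratio
  have hode := fun h E => hUY.turningPoint_hasDerivAt hY₀ hA ha' hderiv isOpen_Ioo hy hlt h (E := E)
  have htheta := IsInverseSquare.turningPoint_isTheta hY₀.le hA ha' hratio
    Ioo_subset_Ioi_self hy hlt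
  refine ⟨E₁, hE₁, hE₁₀, fun E h => √(x₁ E h ^ 2 * U h (x₁ E h) / a h) - 1,
    fun h hh E hE => ?_, fun h hh n => ?_, fun k => ?_⟩
  · rw [add_sub_cancel]
    exact (hy ⟨h, hh⟩).eq_sqrt_mul_rpow_mul_sqrt hE hE.1 (hA.trans_le (ha h hh).1)
  · have hsmooth := contDiffOn_of_hasDerivAt_comp (hvel.contDiffOn ⟨h, hh⟩) isOpen_Ioo
      (hlt ⟨h, hh⟩) (hode ⟨h, hh⟩)
    exact ((herr.contDiffOn ⟨h, hh⟩).comp hsmooth (hlt ⟨h, hh⟩)).of_le (by exact_mod_cast le_top)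
  · obtain ⟨C, hC, hbound⟩ := (hvel.iteratedDerivWithin_comp_isBigO_rpow hY₀.le isOpen_Ioo
      Ioo_subset_Ioi_self hlt hode htheta herr k).exists_pos
    refine ⟨C, hC, fun h hh E hE => ?_⟩
    have hbound_E := isBigOWith_principal.1 hbound (⟨h, hh⟩, E) ⟨mem_univ _, hE⟩
    rw [Real.norm_of_nonneg (Real.rpow_nonneg hE.1.le _)] at hbound_E
    have hexponent : (1 : ℝ) / 2 - k = -1 / 2 * ((-1 : ℤ) + k * ((3 : ℤ) - 1)) := by
      push_cast
      ring
    rw [hexponent]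
    exact hbound_E

/-- the unique positive turning point satisfies
`x₁(E;ℏ) = c(ℏ) E^{-1/2}(1 + O(E^{1/2}))` with `c(ℏ) = √(μ₊² + ℏ²/4)` as `E → 0+`,
uniformly in `0 < ℏ < 1`, and the error satisfies `∂_E^k O(E^{1/2}) = O(E^{1/2−k})`. -/
theorem turning_point_asymptotics
    (V : ℝ → ℝ) (μp E₀ : ℝ) (hμp : μp ≠ 0) (hE₀ : 0 < E₀)
    (hVsmooth : ∀ n : ℕ, ContDiff ℝ n V)
    (hVpos : ∀ x, 0 < V x)
    (hVp : ∀ k : ℕ, ∃ C > 0, ∀ x : ℝ, 1 ≤ x →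
      |iteratedDeriv k (fun t => V t - μp ^ 2 / t ^ 2) x| ≤ C * x ^ (-3 - k : ℝ))
    (x₁ : ℝ → ℝ → ℝ)
    (hx₁ : ∀ E ∈ Set.Ioo 0 E₀, ∀ h ∈ Set.Ioo (0 : ℝ) 1,
      0 < x₁ E h ∧ V0 V h (x₁ E h) = E ∧ ∀ x, 0 < x → V0 V h x = E → x = x₁ E h) :
    ∃ E₁, 0 < E₁ ∧ E₁ ≤ E₀ ∧ ∃ err : ℝ → ℝ → ℝ,
      (∀ h ∈ Set.Ioo (0 : ℝ) 1, ∀ E ∈ Set.Ioo 0 E₁,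
        x₁ E h = Real.sqrt (μp ^ 2 + h ^ 2 / 4) * E ^ (-(1 : ℝ) / 2) * (1 + err E h)) ∧
      (∀ h ∈ Set.Ioo (0 : ℝ) 1, ∀ n : ℕ,
        ContDiffOn ℝ n (fun E => err E h) (Set.Ioo 0 E₁)) ∧
      (∀ k : ℕ, ∃ C > 0, ∀ h ∈ Set.Ioo (0 : ℝ) 1, ∀ E ∈ Set.Ioo 0 E₁,
        |iteratedDerivWithin k (fun E' => err E' h) (Set.Ioo 0 E₁) E|
          ≤ C * E ^ ((1 : ℝ) / 2 - k)) := by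
  exact turning_point_asymptotics_general (A := μp ^ 2) (B := μp ^ 2 + 1) one_pos hE₀
    (by positivity) (fun h hh => ⟨by linarith [sq_nonneg h], by nlinarith [hh.1, hh.2]⟩)
    (isInverseSquare_V0 (contDiff_infty.2 hVsmooth).contDiffOn hVp) x₁
    fun h hh E hE => hx₁ E hE h hh
end
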